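/- Let G ≤ SL(2,ℝ) be a non-uniform lattice and let e ∈ ℝ be a cusp of G, i.e. a point of ℝ fixed by some parabolic element of G (an element of trace ±2 different from ±Id). Then for every ḡ ∈ SL(2,ℝ) with ḡ·e = ∞, the Lagrange spectrum 𝓛(ḡGḡ⁻¹, ∞) of the conjugated group contains a Hall ray: there exists L₀ ∈ ℝ such that every extended real L with L₀ ≤ L ≤ +∞ belongs to 𝓛(ḡGḡ⁻¹, ∞). -/

import Mathlib

open scoped ENNReal
open MeasureTheory

noncomputable section

/-- `SL(2,ℝ)`. -/
abbrev SL2R := Matrix.SpecialLinearGroup (Fin 2) ℝ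

/-- The entry in position (1,1) of a matrix in `SL(2,ℝ)`. -/
def entryA (g : SL2R) : ℝ := g.1 0 0

/-- The entry in position (1,2) of a matrix in `SL(2,ℝ)`. -/
def entryB (g : SL2R) : ℝ := g.1 0 1

/-- The entry in position (2,1) of a matrix in `SL(2,ℝ)`. -/
def entryC (g : SL2R) : ℝ := g.1 1 0

/-- The entry in position (2,2) of a matrix in `SL(2,ℝ)`. -/
def entryD (g : SL2R) : ℝ := g.1 1 1

/-- The Möbius action of `g ∈ SL(2,ℝ)` on the complex plane (well defined on the
upper half-plane): `z ↦ (az+b)/(cz+d)`. -/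
def moeb (g : SL2R) (z : ℂ) : ℂ :=
  ((entryA g : ℂ) * z + (entryB g : ℂ)) / ((entryC g : ℂ) * z + (entryD g : ℂ))

/-- The upper half-plane `ℍ = {z : 0 < Im z}`, as a subset of `ℂ`. -/
def UHP : Set ℂ := {z : ℂ | 0 < z.im}

/-- Hyperbolic area of a subset of the upper half-plane: `∫∫ dx dy / y²`. -/
def hypArea (s : Set ℂ) : ℝ≥0∞ := ∫⁻ z in s, ENNReal.ofReal (1 / z.im ^ 2)

/-- A subgroup of `SL(2,ℝ)` is discrete if each of its elements is isolated
(in the topology of coefficientwise convergence). -/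
def IsDiscreteSubgroup (G : Subgroup SL2R) : Prop :=
  ∀ g ∈ G, ∃ ε > (0 : ℝ), ∀ h ∈ G, (∀ i j, |h.1 i j - g.1 i j| < ε) → h = g

/-- `F` is a (measurable) fundamental domain for the action of `G` on the upper
half-plane: the `G`-translates of `F` cover `ℍ`, and for every `g ∈ G` acting
nontrivially, `F` and `g·F` overlap in hyperbolic area zero. -/
def IsFundDom (G : Subgroup SL2R) (F : Set ℂ) : Prop :=
  F ⊆ UHP ∧ MeasurableSet F ∧
    (∀ z ∈ UHP, ∃ g ∈ G, moeb g z ∈ F) ∧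
    (∀ g ∈ G, (∃ z ∈ UHP, moeb g z ≠ z) → hypArea (F ∩ (moeb g '' F)) = 0)

/-- `G ≤ SL(2,ℝ)` is a non-uniform lattice: it is discrete, it admits a fundamental
domain of finite hyperbolic area, and the quotient `G\ℍ` is not compact (no compact
subset of `ℍ` meets every orbit). -/
def IsNonUniformLattice (G : Subgroup SL2R) : Prop :=
  IsDiscreteSubgroup G ∧
    (∃ F : Set ℂ, IsFundDom G F ∧ hypArea F < ⊤) ∧
    ¬ ∃ K : Set ℂ, IsCompact K ∧ K ⊆ UHP ∧ ∀ z ∈ UHP, ∃ g ∈ G, moeb g z ∈ K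

/-- `∞` is a cusp of `G`: `G` contains a parabolic element `[[1,μ],[0,1]]` with `μ ≠ 0`. -/
def HasCuspAtInfty (G : Subgroup SL2R) : Prop :=
  ∃ μ : ℝ, μ ≠ 0 ∧ ∃ p : SL2R, p.1 = !![1, μ; 0, 1] ∧ p ∈ G

/-- The set of `k > 0` such that there are infinitely many `g ∈ G`, with pairwise
distinct values `g·∞ = a(g)/c(g) ∈ ℝ`, with `|α − g·∞| < 1/(k c(g)²)`. -/
def LagrangeSet (G : Subgroup SL2R) (α : ℝ) : Set ℝ :=
  {k : ℝ | 0 < k ∧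
    {v : ℝ | ∃ g ∈ G, entryC g ≠ 0 ∧ v = entryA g / entryC g ∧
      |α - v| < 1 / (k * entryC g ^ 2)}.Infinite}

/-- The Lagrange value `L_G(α) ∈ [0,∞]` (with the convention `sup ∅ = 0`). -/
def LagrangeValue (G : Subgroup SL2R) (α : ℝ) : ℝ≥0∞ :=
  sSup (ENNReal.ofReal '' LagrangeSet G α)

/-- The Lagrange spectrum of `G` at `∞`. -/
def LagrangeSpectrum (G : Subgroup SL2R) : Set ℝ≥0∞ :=
  {L : ℝ≥0∞ | ∃ α : ℝ, LagrangeValue G α = L}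

/-- The Möbius action of `g ∈ SL(2,ℝ)` on the real line: `x ↦ (ax+b)/(cx+d)`. -/
def moebR (g : SL2R) (x : ℝ) : ℝ := (entryA g * x + entryB g) / (entryC g * x + entryD g)

/-- `g ∈ SL(2,ℝ)` is parabolic: it has trace `±2` and is different from `±Id`. -/
def IsParabolic (g : SL2R) : Prop :=
  |entryA g + entryD g| = 2 ∧ g.1 ≠ (1 : Matrix (Fin 2) (Fin 2) ℝ) ∧
    g.1 ≠ (-1 : Matrix (Fin 2) (Fin 2) ℝ)

/-- `e ∈ ℝ` is a cusp of `G`: it is fixed by some parabolic element of `G`. -/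
def IsCuspPointOf (G : Subgroup SL2R) (e : ℝ) : Prop :=
  ∃ g ∈ G, IsParabolic g ∧ entryC g * e + entryD g ≠ 0 ∧ moebR g e = e

lemma eA_mul (g h : SL2R) : entryA (g * h) = entryA g * entryA h + entryB g * entryC h := by
  simp [entryA, entryB, entryC, Matrix.mul_apply, Fin.sum_univ_two]
lemma eB_mul (g h : SL2R) : entryB (g * h) = entryA g * entryB h + entryB g * entryD h := by
  simp [entryA, entryB, entryD, Matrix.mul_apply, Fin.sum_univ_two]
lemma eC_mul (g h : SL2R) : entryC (g * h) = entryC g * entryA h + entryD g * entryC h := by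
  simp [entryA, entryD, entryC, Matrix.mul_apply, Fin.sum_univ_two]
lemma eD_mul (g h : SL2R) : entryD (g * h) = entryC g * entryB h + entryD g * entryD h := by
  simp [entryB, entryD, entryC, Matrix.mul_apply, Fin.sum_univ_two]
lemma eA_inv (g : SL2R) : entryA g⁻¹ = entryD g := by
  simp [entryA, entryD, Matrix.SpecialLinearGroup.coe_inv, Matrix.adjugate_fin_two]
lemma eB_inv (g : SL2R) : entryB g⁻¹ = -entryB g := by
  simp [entryB, Matrix.SpecialLinearGroup.coe_inv, Matrix.adjugate_fin_two]
lemma eC_inv (g : SL2R) : entryC g⁻¹ = -entryC g := by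
  simp [entryC, Matrix.SpecialLinearGroup.coe_inv, Matrix.adjugate_fin_two]
lemma eD_inv (g : SL2R) : entryD g⁻¹ = entryA g := by
  simp [entryA, entryD, Matrix.SpecialLinearGroup.coe_inv, Matrix.adjugate_fin_two]
lemma e_det (g : SL2R) : entryA g * entryD g - entryB g * entryC g = 1 := by
  have := g.2
  rw [Matrix.det_fin_two] at this
  exact this
lemma e_ext {g h : SL2R} (hA : entryA g = entryA h) (hB : entryB g = entryB h)
    (hC : entryC g = entryC h) (hD : entryD g = entryD h) : g = h := by
  apply Subtype.ext
  ext i j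
  fin_cases i <;> fin_cases j
  · exact hA
  · exact hB
  · exact hC
  · exact hD
lemma eA_one : entryA 1 = 1 := by simp [entryA]
lemma eB_one : entryB 1 = 0 := by simp [entryB]
lemma eC_one : entryC 1 = 0 := by simp [entryC]
lemma eD_one : entryD 1 = 1 := by simp [entryD]

/-- Boundedly finite subgroups. -/
def BF (Γ : Subgroup SL2R) : Prop :=
  ∀ N : ℝ, {g : SL2R | g ∈ Γ ∧ |entryA g| ≤ N ∧ |entryB g| ≤ N ∧ |entryC g| ≤ N ∧
    |entryD g| ≤ N}.Finite

lemma sum2_lt {N ε' x y p q : ℝ} (hN : 0 ≤ N) (hx : |x| ≤ N) (hy : |y| ≤ N) (hp : |p| < ε') (hq : |q| < ε') :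
    |x * p + y * q| ≤ 2 * N * ε' := by
  calc |x * p + y * q| ≤ |x * p| + |y * q| := abs_add_le _ _
    _ = |x| * |p| + |y| * |q| := by rw [abs_mul, abs_mul]
    _ ≤ N * ε' + N * ε' := by gcongr
    _ = _ := by ring

lemma bf_of_discrete (G : Subgroup SL2R) (hG : IsDiscreteSubgroup G) : BF G := by
  intro N
  by_contra hinf
  set S := {g : SL2R | g ∈ G ∧ |entryA g| ≤ N ∧ |entryB g| ≤ N ∧ |entryC g| ≤ N ∧
    |entryD g| ≤ N} with hS
  have hinf : S.Infinite := hinf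
  obtain ⟨g₀, hg₀⟩ := hinf.nonempty
  have hN : 0 ≤ N := (abs_nonneg _).trans hg₀.2.1
  obtain ⟨ε, hε, hiso⟩ := hG 1 G.one_mem
  set ε' := ε / (2 * N + 1) with hε'
  have hε'pos : 0 < ε' := by positivity
  have hsmall : 2 * N * ε' < ε := by
    rw [hε', mul_div_assoc', div_lt_iff₀ (by positivity)]; nlinarith
  let f : SL2R → ℝ × ℝ × ℝ × ℝ := fun g => (entryA g, entryB g, entryC g, entryD g)
  have htb : TotallyBounded (Metric.closedBall (0 : ℝ × ℝ × ℝ × ℝ) N) :=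
    (isCompact_closedBall _ _).totallyBounded
  obtain ⟨t, ht, hcov⟩ := Metric.totallyBounded_iff.1 htb (ε' / 2) (by positivity)
  have hmap : ∀ g ∈ S, ∃ y ∈ t, dist (f g) y < ε' / 2 := by
    intro g hg
    have : f g ∈ Metric.closedBall (0 : ℝ × ℝ × ℝ × ℝ) N := by
      simp only [f, mem_closedBall_zero_iff, Prod.norm_def, Real.norm_eq_abs]
      simp [hg.2.1, hg.2.2.1, hg.2.2.2.1, hg.2.2.2.2]
    have := hcov this
    simpa using this
  choose! y hyt hyd using hmap
  obtain ⟨g, hg, h, hh, hne, heq⟩ := hinf.exists_ne_map_eq_of_mapsTo (f := y) (t := t) hyt ht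
  have hd : dist (f g) (f h) < ε' := by
    calc dist (f g) (f h) ≤ dist (f g) (y g) + dist (f h) (y g) := dist_triangle_right _ _ _
      _ < ε' / 2 + ε' / 2 := add_lt_add (hyd g hg) (by rw [heq]; exact hyd h hh)
      _ = ε' := by ring
  simp only [f, Prod.dist_eq, Real.dist_eq, max_lt_iff] at hd
  obtain ⟨dA, dB, dC, dD⟩ := hd
  obtain ⟨hgG, bA, bB, bC, bD⟩ := hg
  apply hne
  have key : g⁻¹ * h = 1 := by
    apply hiso _ (G.mul_mem (G.inv_mem hgG) hh.1)
    have det := e_det g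
    rw [abs_sub_comm] at dA dB dC dD
    have e1 : entryA (g⁻¹ * h) - 1 = entryD g * (entryA h - entryA g) + (-entryB g) * (entryC h - entryC g) := by
      rw [eA_mul, eA_inv, eB_inv]; linear_combination det
    have e2 : entryB (g⁻¹ * h) - 0 = entryD g * (entryB h - entryB g) + (-entryB g) * (entryD h - entryD g) := by
      rw [eB_mul, eA_inv, eB_inv]; ring
    have e3 : entryC (g⁻¹ * h) - 0 = (-entryC g) * (entryA h - entryA g) + (entryA g) * (entryC h - entryC g) := by
      rw [eC_mul, eC_inv, eD_inv]; ring
    have e4 : entryD (g⁻¹ * h) - 1 = (-entryC g) * (entryB h - entryB g) + (entryA g) * (entryD h - entryD g) := by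
      rw [eD_mul, eC_inv, eD_inv]; linear_combination det
    have bB' : |-entryB g| ≤ N := by rwa [abs_neg]
    have bC' : |-entryC g| ≤ N := by rwa [abs_neg]
    have h1 := (sum2_lt hN bD bB' dA dC).trans_lt hsmall
    have h2 := (sum2_lt hN bD bB' dB dD).trans_lt hsmall
    have h3 := (sum2_lt hN bC' bA dA dC).trans_lt hsmall
    have h4 := (sum2_lt hN bC' bA dB dD).trans_lt hsmall
    rw [← e1] at h1; rw [← e2] at h2; rw [← e3] at h3; rw [← e4] at h4
    intro i j
    fin_cases i <;> fin_cases j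
    · simpa [entryA] using h1
    · simpa [entryB] using h2
    · simpa [entryC] using h3
    · simpa [entryD] using h4
  exact (inv_mul_eq_one.1 key)

lemma abs_sum2_le {N M x y p q : ℝ} (hx : |x| ≤ N) (hy : |y| ≤ N) (hp : |p| ≤ M) (hq : |q| ≤ M) :
    |x * p + y * q| ≤ 2 * N * M := by
  have hN := (abs_nonneg _).trans hx
  calc |x * p + y * q| ≤ |x * p| + |y * q| := abs_add_le _ _
    _ = |x| * |p| + |y| * |q| := by rw [abs_mul, abs_mul]
    _ ≤ N * M + N * M := by gcongr
    _ = _ := by ring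

lemma mul_bdd {N M : ℝ} {g h : SL2R} 
    (hg : |entryA g| ≤ N ∧ |entryB g| ≤ N ∧ |entryC g| ≤ N ∧ |entryD g| ≤ N)
    (hh : |entryA h| ≤ M ∧ |entryB h| ≤ M ∧ |entryC h| ≤ M ∧ |entryD h| ≤ M) :
    |entryA (g * h)| ≤ 2 * N * M ∧ |entryB (g * h)| ≤ 2 * N * M ∧ |entryC (g * h)| ≤ 2 * N * M ∧
      |entryD (g * h)| ≤ 2 * N * M := by
  obtain ⟨a, b, c, d⟩ := hg
  obtain ⟨a', b', c', d'⟩ := hh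
  rw [eA_mul, eB_mul, eC_mul, eD_mul]
  exact ⟨abs_sum2_le a b a' c', abs_sum2_le a b b' d', abs_sum2_le c d a' c', abs_sum2_le c d b' d'⟩

lemma exists_bdd (g : SL2R) : ∃ N : ℝ, |entryA g| ≤ N ∧ |entryB g| ≤ N ∧ |entryC g| ≤ N ∧ |entryD g| ≤ N := by
  refine ⟨|entryA g| + |entryB g| + |entryC g| + |entryD g|, ?_, ?_, ?_, ?_⟩ <;>
  linarith [abs_nonneg (entryA g), abs_nonneg (entryB g), abs_nonneg (entryC g), abs_nonneg (entryD g)]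

lemma bf_conj (G : Subgroup SL2R) (hG : BF G) (k : SL2R) :
    BF (Subgroup.map (MulAut.conj k).toMonoidHom G) := by
  intro N
  obtain ⟨M, hM⟩ := exists_bdd k
  obtain ⟨M', hM'⟩ := exists_bdd k⁻¹
  refine ((hG (2 * (2 * M' * N) * M)).image (fun g => k * g * k⁻¹)).subset ?_
  rintro g ⟨⟨h, hh, rfl⟩, hb⟩
  refine ⟨h, ⟨hh, ?_⟩, rfl⟩
  have := mul_bdd (mul_bdd hM' hb) hM
  simpa [mul_assoc] using this

lemma bf_countable (G : Subgroup SL2R) (hG : BF G) : (G : Set SL2R).Countable := by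
  have : (G : Set SL2R) ⊆ ⋃ n : ℕ, {g : SL2R | g ∈ G ∧ |entryA g| ≤ n ∧ |entryB g| ≤ n ∧ |entryC g| ≤ n ∧
    |entryD g| ≤ n} := by
    intro g hg
    obtain ⟨N, h1, h2, h3, h4⟩ := exists_bdd g
    obtain ⟨n, hn⟩ := exists_nat_ge N
    exact Set.mem_iUnion.2 ⟨n, hg, h1.trans hn, h2.trans hn, h3.trans hn, h4.trans hn⟩
  exact (Set.countable_iUnion fun n : ℕ => (hG n).countable).mono this

/-- Existence of the unit translation structure. -/
lemma cusp_infty (G : Subgroup SL2R) (e : ℝ) (he : IsCuspPointOf G e)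
    (k : SL2R) (hk : entryC k * e + entryD k = 0) :
    ∃ T ∈ Subgroup.map (MulAut.conj k).toMonoidHom G, ∃ μ : ℝ, 0 < μ ∧ entryA T = 1 ∧ entryB T = μ ∧
      entryC T = 0 ∧ entryD T = 1 := by
  obtain ⟨g, hg, ⟨htr, hn1, hn2⟩, hden, hfix⟩ := he
  obtain ⟨h, hh⟩ : ∃ h, h = k * g * k⁻¹ := ⟨_, rfl⟩
  have hmem : h ∈ Subgroup.map (MulAut.conj k).toMonoidHom G := ⟨g, hg, hh.symm⟩
  have detk := e_det k
  have detg := e_det g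
  have hfix' : entryA g * e + entryB g = e * (entryC g * e + entryD g) := by
    rw [moebR, div_eq_iff hden] at hfix; exact hfix
  have hC : entryC h = 0 := by
    rw [hh, eC_mul, eA_inv, eC_inv, eC_mul, eD_mul]
    have hd : entryD k = -(entryC k * e) := by linarith
    rw [hd]
    linear_combination (-(entryC k)^2) * hfix'
  have htr' : entryA h + entryD h = entryA g + entryD g := by
    rw [hh, eA_mul, eA_mul, eB_mul, eD_mul, eC_mul, eD_mul, eA_inv, eB_inv, eC_inv, eD_inv]
    linear_combination (entryA g + entryD g) * detk
  have deth := e_det h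
  rw [hC, mul_zero, sub_zero] at deth
  have hcases : (entryA h = 1 ∧ entryD h = 1) ∨ (entryA h = -1 ∧ entryD h = -1) := by
    rw [← htr'] at htr
    rcases (abs_eq (by norm_num)).1 htr with h2 | h2
    · left
      have : (entryA h - 1)^2 = 0 := by linear_combination entryA h * h2 - deth
      have : entryA h - 1 = 0 := by simpa using this
      constructor <;> linarith
    · right
      have : (entryA h + 1)^2 = 0 := by linear_combination entryA h * h2 - deth
      have : entryA h + 1 = 0 := by simpa using this
      constructor <;> linarith
  have hgh : g = k⁻¹ * h * k := by rw [hh]; group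
  have hB : entryB h ≠ 0 := by
    intro hB
    rcases hcases with ⟨h1, h2⟩ | ⟨h1, h2⟩
    · have : h = 1 := e_ext (by rw [h1, eA_one]) (by rw [hB, eB_one]) (by rw [hC, eC_one]) (by rw [h2, eD_one])
      apply hn1
      rw [hgh, this]; simp
    · have : h = -1 := e_ext (by rw [h1]; simp [entryA]) (by rw [hB]; simp [entryB]) (by rw [hC]; simp [entryC]) (by rw [h2]; simp [entryD])
      apply hn2
      rw [hgh, this]; simp
  have sq : entryA (h * h) = 1 ∧ entryC (h * h) = 0 ∧ entryD (h * h) = 1 ∧ entryB (h * h) = 2 * entryA h * entryB h := by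
    rw [eA_mul, eB_mul, eC_mul, eD_mul, hC]
    rcases hcases with ⟨h1, h2⟩ | ⟨h1, h2⟩ <;> rw [h1, h2] <;> refine ⟨by ring, by ring, by ring, by ring⟩
  obtain ⟨s1, s2, s3, s4⟩ := sq
  have hA : entryA h ≠ 0 := by rcases hcases with ⟨h1, h2⟩ | ⟨h1, h2⟩ <;> rw [h1] <;> norm_num
  rcases lt_or_gt_of_ne (mul_ne_zero (mul_ne_zero two_ne_zero hA) hB) with hlt | hgt
  · refine ⟨(h * h)⁻¹, Subgroup.inv_mem _ (Subgroup.mul_mem _ hmem hmem), -(2 * entryA h * entryB h), by linarith, ?_⟩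
    rw [eA_inv, eB_inv, eC_inv, eD_inv, s1, s2, s3, s4]; simp
  · exact ⟨h * h, Subgroup.mul_mem _ hmem hmem, _, hgt, s1, s4, s2, s3⟩

/-- Package of facts about a discrete group with a cusp at infinity. -/
structure CG (Γ : Subgroup SL2R) (μ κ : ℝ) : Prop where
  bf : BF Γ
  mu : 0 < μ
  kap : 0 < κ
  tr : ∀ j : ℤ, ∃ t ∈ Γ, entryA t = 1 ∧ entryB t = j * μ ∧ entryC t = 0 ∧ entryD t = 1
  f1 : ∀ g ∈ Γ, entryC g ≠ 0 → κ ≤ |entryC g|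
  f2 : ∀ g ∈ Γ, entryC g = 0 → |entryA g| = 1

lemma tr_all (Γ : Subgroup SL2R) (T : SL2R) (hT : T ∈ Γ) (μ : ℝ) (hA : entryA T = 1)
    (hB : entryB T = μ) (hC : entryC T = 0) (hD : entryD T = 1) (j : ℤ) :
    ∃ t ∈ Γ, entryA t = 1 ∧ entryB t = j * μ ∧ entryC t = 0 ∧ entryD t = 1 := by
  induction j using Int.induction_on with
  | zero => exact ⟨1, Γ.one_mem, by simp [eA_one, eB_one, eC_one, eD_one]⟩
  | succ n ih =>
    obtain ⟨t, ht, a, b, c, d⟩ := ih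
    refine ⟨t * T, Γ.mul_mem ht hT, ?_⟩
    rw [eA_mul, eB_mul, eC_mul, eD_mul, a, b, c, d, hA, hB, hC, hD]
    push_cast
    refine ⟨by ring, by ring, by ring, by ring⟩
  | pred n ih =>
    obtain ⟨t, ht, a, b, c, d⟩ := ih
    refine ⟨t * T⁻¹, Γ.mul_mem ht (Γ.inv_mem hT), ?_⟩
    rw [eA_mul, eB_mul, eC_mul, eD_mul, eA_inv, eB_inv, eC_inv, eD_inv, a, b, c, d, hA, hB, hC, hD]
    push_cast
    push_cast at b
    refine ⟨by ring, by ring, by ring, by ring⟩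

lemma stab_not_lt_one (Γ : Subgroup SL2R) (hbf : BF Γ) (T : SL2R) (hT : T ∈ Γ) (μ : ℝ) (hμ : 0 < μ)
    (hA : entryA T = 1)
    (hB : entryB T = μ) (hC : entryC T = 0) (hD : entryD T = 1) (g : SL2R) (hg : g ∈ Γ)
    (hgC : entryC g = 0) : ¬ |entryA g| < 1 := by
  intro hlt
  have det := e_det g
  rw [hgC] at det
  have key : ∀ n : ℕ, ∃ t ∈ Γ, entryA t = 1 ∧ entryB t = (entryA g ^ 2) ^ n * μ ∧ entryC t = 0 ∧
      entryD t = 1 := by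
    intro n
    induction n with
    | zero => exact ⟨T, hT, hA, by rw [hB]; simp, hC, hD⟩
    | succ n ih =>
      obtain ⟨t, ht, a, b, c, d⟩ := ih
      refine ⟨g * t * g⁻¹, Γ.mul_mem (Γ.mul_mem hg ht) (Γ.inv_mem hg), ?_⟩
      simp only [eA_mul, eB_mul, eC_mul, eD_mul, eA_inv, eB_inv, eC_inv,
        eD_inv, a, b, c, d, hgC]
      refine ⟨by linear_combination det, by ring, by ring, by linear_combination det⟩
  choose t ht tA tB tC tD using key
  have hne : entryA g ≠ 0 := by rintro h; rw [h] at det; simp at det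
  have hsq : entryA g ^ 2 < 1 := by rw [sq_lt_one_iff_abs_lt_one]; exact hlt
  have hpos : 0 < entryA g ^ 2 := by positivity
  have hinj : Function.Injective t := by
    intro m n hmn
    have : entryB (t m) = entryB (t n) := by rw [hmn]
    rw [tB, tB] at this
    have := mul_right_cancel₀ hμ.ne' this
    exact (pow_right_strictAnti₀ hpos hsq).injective this
  refine Set.infinite_of_injective_forall_mem hinj (s := _) ?_ (hbf (max 1 μ))
  intro n
  refine ⟨ht n, ?_, ?_, ?_, ?_⟩
  · rw [tA]; simp
  · rw [tB, abs_of_nonneg (by positivity)]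
    refine le_trans ?_ (le_max_right _ _)
    have : (entryA g ^ 2) ^ n ≤ 1 := pow_le_one₀ hpos.le hsq.le
    nlinarith
  · rw [tC]; simp
  · rw [tD]; simp

lemma CG_of (Γ : Subgroup SL2R) (hbf : BF Γ) (T : SL2R) (hT : T ∈ Γ) (μ : ℝ) (hμ : 0 < μ)
    (hA : entryA T = 1) (hB : entryB T = μ) (hC : entryC T = 0) (hD : entryD T = 1) :
    ∃ κ, CG Γ μ κ := by
  have htr := tr_all Γ T hT μ hA hB hC hD
  -- the finite set
  set N : ℝ := 1 + μ + μ * (2 + μ) with hN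
  have hfin := hbf N
  have red : ∀ g ∈ Γ, entryC g ≠ 0 → |entryC g| ≤ 1 →
      ∃ h ∈ Γ, entryC h = entryC g ∧ |entryA h| ≤ N ∧ |entryB h| ≤ N ∧ |entryC h| ≤ N ∧ |entryD h| ≤ N := by
    intro g hg hc hc1
    have step : ∀ x : ℝ, ∃ j : ℤ, |x + j * μ * entryC g - 1| ≤ μ * |entryC g| := by
      intro x
      have hne : μ * entryC g ≠ 0 := mul_ne_zero hμ.ne' hc
      refine ⟨-⌊(x - 1) / (μ * entryC g)⌋, ?_⟩
      have e : x + ((-⌊(x - 1) / (μ * entryC g)⌋ : ℤ) : ℝ) * μ * entryC g - 1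
          = Int.fract ((x - 1) / (μ * entryC g)) * (μ * entryC g) := by
        rw [Int.fract, sub_mul, div_mul_cancel₀ _ hne]; push_cast; ring
      rw [e, abs_mul, abs_mul μ, abs_of_pos hμ, abs_of_nonneg (Int.fract_nonneg _)]
      have := (Int.fract_lt_one ((x - 1) / (μ * entryC g))).le
      exact mul_le_of_le_one_left (by positivity) this
    obtain ⟨i, hi⟩ := step (entryA g)
    obtain ⟨j, hj⟩ := step (entryD g)
    obtain ⟨s, hs, sA, sB, sC, sD⟩ := htr i
    obtain ⟨t, ht, tA, tB, tC, tD⟩ := htr j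
    have hCh : entryC (s * g * t) = entryC g := by
      rw [eC_mul, eC_mul, eD_mul, sC, sD, tA, tC]; ring
    have hAh : entryA (s * g * t) = entryA g + i * μ * entryC g := by
      rw [eA_mul, eA_mul, eB_mul, sA, sB, tA, tC]; ring
    have hDh : entryD (s * g * t) = entryD g + j * μ * entryC g := by
      rw [eD_mul, eC_mul, eD_mul, sC, sD, tB, tD]; ring
    have det := e_det (s * g * t)
    rw [← hAh] at hi
    rw [← hDh] at hj
    have hmem : s * g * t ∈ Γ := Γ.mul_mem (Γ.mul_mem hs hg) ht
    revert hCh hi hj det hmem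
    generalize s * g * t = h
    intro hj hi hCh det hmem
    have hc0 : 0 < |entryC g| := abs_pos.2 hc
    have hμc : μ * |entryC g| ≤ μ := mul_le_of_le_one_right hμ.le hc1
    have bA : |entryA h| ≤ 1 + μ := by
      have := abs_le.1 hi; rw [abs_le]; constructor <;> linarith
    have bD : |entryD h| ≤ 1 + μ := by
      have := abs_le.1 hj; rw [abs_le]; constructor <;> linarith
    refine ⟨h, hmem, hCh, ?_, ?_, ?_, ?_⟩
    · rw [hN]; nlinarith
    · have e : entryB h * entryC h = (entryA h - 1) * entryD h + (entryD h - 1) := by linear_combination -det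
      have : |entryB h| * |entryC g| ≤ (μ * (2 + μ)) * |entryC g| := by
        rw [← hCh, ← abs_mul, e, hCh]
        calc _ ≤ |(entryA h - 1) * entryD h| + |entryD h - 1| := abs_add_le _ _
          _ ≤ μ * |entryC g| * (1 + μ) + μ * |entryC g| := by rw [abs_mul]; gcongr
          _ = _ := by ring
      have := le_of_mul_le_mul_right this hc0
      rw [hN]; linarith
    · rw [hCh, hN]; nlinarith
    · rw [hN]; nlinarith
  set S := {g : SL2R | g ∈ Γ ∧ |entryA g| ≤ N ∧ |entryB g| ≤ N ∧ |entryC g| ≤ N ∧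
    |entryD g| ≤ N} with hS
  have hS' : {g ∈ S | entryC g ≠ 0}.Finite := hfin.subset (Set.sep_subset _ _)
  have : ∃ κ : ℝ, 0 < κ ∧ κ ≤ 1 ∧ ∀ g ∈ {g ∈ S | entryC g ≠ 0}, κ ≤ |entryC g| := by
    by_cases hne : {g ∈ S | entryC g ≠ 0}.Nonempty
    · obtain ⟨g, hg, hmin⟩ := Set.exists_min_image _ (fun g => |entryC g|) hS' hne
      exact ⟨min |entryC g| 1, lt_min (abs_pos.2 hg.2) one_pos, min_le_right _ _,
        fun h hh => (min_le_left _ _).trans (hmin h hh)⟩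
    · exact ⟨1, one_pos, le_rfl, fun g hg => absurd ⟨g, hg⟩ hne⟩
  obtain ⟨κ, hκ, hκ1, hκS⟩ := this
  refine ⟨κ, hbf, hμ, hκ, htr, ?_, ?_⟩
  · intro g hg hc
    by_cases hc1 : |entryC g| ≤ 1
    · obtain ⟨h, hh, hCh, hb⟩ := red g hg hc hc1
      rw [← hCh]
      exact hκS h ⟨⟨hh, hb⟩, by rw [hCh]; exact hc⟩
    · linarith
  · intro g hg hc
    have h1 := stab_not_lt_one Γ hbf T hT μ hμ hA hB hC hD g hg hc
    have h2 := stab_not_lt_one Γ hbf T hT μ hμ hA hB hC hD g⁻¹ (Γ.inv_mem hg) (by rw [eC_inv, hc, neg_zero])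
    rw [eA_inv] at h2
    have det := e_det g
    rw [hc, mul_zero, sub_zero] at det
    have : |entryA g| * |entryD g| = 1 := by rw [← abs_mul, det, abs_one]
    nlinarith

/-- The point `g ∞`. -/
def pt (g : SL2R) : ℝ := entryA g / entryC g

lemma pt_sub (g h : SL2R) (hg : entryC g ≠ 0) (hh : entryC h ≠ 0) :
    entryC (g⁻¹ * h) = entryC g * entryC h * (pt g - pt h) := by
  rw [eC_mul, eC_inv, eD_inv, pt, pt]; field_simp; ring

lemma CG.sep {Γ : Subgroup SL2R} {μ κ : ℝ} (H : CG Γ μ κ) {g h : SL2R} (hg : g ∈ Γ) (hh : h ∈ Γ)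
    (cg : entryC g ≠ 0) (ch : entryC h ≠ 0) (hne : pt g ≠ pt h) :
    κ ≤ |entryC g| * |entryC h| * |pt g - pt h| := by
  rw [← abs_mul, ← abs_mul, ← pt_sub g h cg ch]
  apply H.f1 _ (Γ.mul_mem (Γ.inv_mem hg) hh)
  rw [pt_sub g h cg ch]
  exact mul_ne_zero (mul_ne_zero cg ch) (sub_ne_zero.2 hne)

lemma CG.same {Γ : Subgroup SL2R} {μ κ : ℝ} (H : CG Γ μ κ) {g h : SL2R} (hg : g ∈ Γ) (hh : h ∈ Γ)
    (hz : entryC (g⁻¹ * h) = 0) : |entryC g| = |entryC h| := by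
  have h1 := H.f2 _ (Γ.mul_mem (Γ.inv_mem hg) hh) hz
  have : h = g * (g⁻¹ * h) := by group
  have h2 : entryC h = entryC g * entryA (g⁻¹ * h) := by
    conv_lhs => rw [this]
    rw [eC_mul, hz]; ring
  rw [h2, abs_mul, h1, mul_one]

lemma coe_smul_eq (g : SL2R) (z : UpperHalfPlane) : ((g • z : UpperHalfPlane) : ℂ) = moeb g z := by
  rw [UpperHalfPlane.coe_specialLinearGroup_apply]
  rfl

lemma inv_meas (g : SL2R) (s : Set UpperHalfPlane) (_ : MeasurableSet s) :
    volume ((fun z => g • z) ⁻¹' s) = volume s :=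
  measure_preimage_smul (μ := (volume : Measure UpperHalfPlane)) (Matrix.SpecialLinearGroup.mapGL ℝ g) s

lemma meas_smul (g : SL2R) : Measurable (fun z : UpperHalfPlane => g • z) :=
  measurable_const_smul (Matrix.SpecialLinearGroup.mapGL ℝ g : GL (Fin 2) ℝ)

lemma hypArea_eq (s : Set UpperHalfPlane) : volume s = hypArea ((↑) '' s) := by
  rw [UpperHalfPlane.volume_eq_lintegral, hypArea]
  congr 1
  ext z
  rw [ENNReal.ofReal, ENNReal.coe_inj]
  ext
  rw [Real.coe_toNNReal _ (by positivity)]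
  simp

/-- Finite volume covering of the upper half plane. -/
def FinCover (Γ : Subgroup SL2R) : Prop :=
  ∃ F : Set UpperHalfPlane, MeasurableSet F ∧ volume F < ⊤ ∧ ∀ z, ∃ g ∈ Γ, g • z ∈ F

lemma finCover_of_lattice (G : Subgroup SL2R) (hG : IsNonUniformLattice G) : FinCover G := by
  obtain ⟨-, ⟨F, ⟨hF1, hF2, hF3, -⟩, hF⟩, -⟩ := hG
  refine ⟨(↑) ⁻¹' F, UpperHalfPlane.measurable_coe hF2, ?_, ?_⟩
  · rw [hypArea_eq]
    refine lt_of_le_of_lt ?_ hF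
    exact lintegral_mono_set (Set.image_preimage_subset _ _)
  · intro z
    obtain ⟨g, hg, h⟩ := hF3 z z.im_pos
    exact ⟨g, hg, by rw [Set.mem_preimage, coe_smul_eq]; exact h⟩

lemma finCover_conj (G : Subgroup SL2R) (hG : FinCover G) (k : SL2R) :
    FinCover (Subgroup.map (MulAut.conj k).toMonoidHom G) := by
  obtain ⟨F, hF, hv, hc⟩ := hG
  refine ⟨(fun z => k⁻¹ • z) ⁻¹' F, meas_smul _ hF, by rwa [inv_meas _ _ hF], fun z => ?_⟩
  obtain ⟨g, hg, h⟩ := hc (k⁻¹ • z)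
  refine ⟨k * g * k⁻¹, ⟨g, hg, rfl⟩, ?_⟩
  simpa [mul_smul] using h

lemma box_vol (a b c d : ℝ) : volume {z : ℂ | z.re ∈ Set.Ioo a b ∧ z.im ∈ Set.Ioo c d} =
    ENNReal.ofReal (b - a) * ENNReal.ofReal (d - c) := by
  have : {z : ℂ | z.re ∈ Set.Ioo a b ∧ z.im ∈ Set.Ioo c d} =
      Complex.measurableEquivRealProd ⁻¹' (Set.Ioo a b ×ˢ Set.Ioo c d) := by
    ext z; simp [Complex.measurableEquivRealProd]
  rw [this, Complex.volume_preserving_equiv_real_prod.measure_preimage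
    (measurableSet_Ioo.prod measurableSet_Ioo).nullMeasurableSet, Measure.volume_eq_prod,
    Measure.prod_prod, Real.volume_Ioo, Real.volume_Ioo]

lemma ball_vol (ξ ρ : ℝ) (hρ : 0 < ρ) : volume {z : UpperHalfPlane | ‖(z : ℂ) - ξ‖ < ρ} = ⊤ := by
  rw [hypArea_eq]
  have key : ∀ ε : ℝ, 0 < ε → ε < ρ / 4 → ENNReal.ofReal (ρ / (8 * ε)) ≤
      hypArea ((↑) '' {z : UpperHalfPlane | ‖(z : ℂ) - ξ‖ < ρ}) := by
    intro ε hε hε2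
    set Q := {z : ℂ | z.re ∈ Set.Ioo ξ (ξ + ρ / 2) ∧ z.im ∈ Set.Ioo ε (2 * ε)} with hQ
    have hsub : Q ⊆ (↑) '' {z : UpperHalfPlane | ‖(z : ℂ) - ξ‖ < ρ} := by
      rintro z ⟨⟨h1, h2⟩, h3, h4⟩
      refine ⟨⟨z, hε.trans h3⟩, ?_, rfl⟩
      show ‖z - ξ‖ < ρ
      refine (Complex.norm_le_abs_re_add_abs_im _).trans_lt ?_
      simp only [Complex.sub_re, Complex.ofReal_re, Complex.sub_im, Complex.ofReal_im, sub_zero]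
      rw [abs_of_pos (by linarith), abs_of_pos (by linarith)]
      linarith
    have hQm : MeasurableSet Q :=
      (Complex.measurable_re measurableSet_Ioo).inter (Complex.measurable_im measurableSet_Ioo)
    calc ENNReal.ofReal (ρ / (8 * ε))
        = ENNReal.ofReal (1 / (2 * ε) ^ 2) * volume Q := by
          rw [hQ, box_vol, ← ENNReal.ofReal_mul (by linarith), ← ENNReal.ofReal_mul (by positivity)]
          congr 1
          field_simp
          ring
      _ = ∫⁻ z in Q, ENNReal.ofReal (1 / (2 * ε) ^ 2) := by rw [setLIntegral_const]
      _ ≤ ∫⁻ z in Q, ENNReal.ofReal (1 / z.im ^ 2) := by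
          refine setLIntegral_mono' hQm ?_
          rintro z ⟨_, h3, h4⟩
          apply ENNReal.ofReal_le_ofReal
          have : 0 < z.im := hε.trans h3
          gcongr
      _ ≤ _ := lintegral_mono_set hsub
  by_contra hne
  obtain ⟨M, hM⟩ := WithTop.ne_top_iff_exists.1 hne
  rw [← hM] at key
  have h1 := key (min (ρ / 8) (ρ / (8 * (M + 1)))) (by positivity)
    ((min_le_left _ _).trans_lt (by linarith))
  have h2 : (M : ℝ) + 1 ≤ ρ / (8 * min (ρ / 8) (ρ / (8 * (M + 1)))) := by
    rw [le_div_iff₀ (by positivity)]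
    calc (M + 1 : ℝ) * (8 * min (ρ / 8) (ρ / (8 * (M + 1)))) ≤ (M + 1) * (8 * (ρ / (8 * (M + 1)))) := by
          gcongr; exact min_le_right _ _
      _ = ρ := by field_simp
  have h3 := (ENNReal.ofReal_le_ofReal h2).trans h1
  have h4 : ENNReal.ofReal ((M : ℝ) + 1) ≤ ENNReal.ofReal (M : ℝ) := by
    rw [ENNReal.ofReal_coe_nnreal (p := M)]; exact h3
  rw [ENNReal.ofReal_le_ofReal_iff (by positivity)] at h4
  linarith

lemma cover_contra (Γ : Subgroup SL2R) (hbf : BF Γ) (hF : FinCover Γ) (B : Set UpperHalfPlane)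
    (hB : MeasurableSet B) (hvol : volume B = ⊤)
    (hfin : {g : SL2R | g ∈ Γ ∧ ∃ z ∈ B, g • z ∈ B}.Finite) : False := by
  obtain ⟨F, hF, hv, hc⟩ := hF
  set Φ := {g : SL2R | g ∈ Γ ∧ ∃ z ∈ B, g • z ∈ B} with hΦ
  have hcount : Countable Γ := (bf_countable Γ hbf).to_subtype
  have hcov : B ⊆ ⋃ g : Γ, ((fun z => (g : SL2R) • z) ⁻¹' F) ∩ B := by
    intro z hz
    obtain ⟨g, hg, h⟩ := hc z
    exact Set.mem_iUnion.2 ⟨⟨g, hg⟩, h, hz⟩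
  have hvolg : ∀ g : Γ, volume (((fun z => (g : SL2R) • z) ⁻¹' F) ∩ B) =
      ∫⁻ w in F, ((fun z => (g : SL2R)⁻¹ • z) ⁻¹' B).indicator 1 w := by
    intro g
    rw [← inv_meas (g : SL2R)⁻¹ _ ((meas_smul _ hF).inter hB),
      lintegral_indicator_one (meas_smul _ hB), Measure.restrict_apply (meas_smul _ hB), Set.inter_comm]
    congr 1
    ext w
    simp
  have hpt : ∀ w, ∑' g : Γ, ((fun z => (g : SL2R)⁻¹ • z) ⁻¹' B).indicator (1 : UpperHalfPlane → ℝ≥0∞) w ≤ (Φ.encard : ℝ≥0∞) := by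
    intro w
    set S : Set Γ := {g : Γ | (g : SL2R)⁻¹ • w ∈ B} with hS
    have e1 : ∀ g : Γ, ((fun z => (g : SL2R)⁻¹ • z) ⁻¹' B).indicator (1 : UpperHalfPlane → ℝ≥0∞) w
        = S.indicator 1 g := by
      intro g
      by_cases h : (g : SL2R)⁻¹ • w ∈ B
      · rw [Set.indicator_of_mem (by exact h), Set.indicator_of_mem (by exact h)]; rfl
      · rw [Set.indicator_of_notMem (by exact h), Set.indicator_of_notMem (by exact h)]
    rw [tsum_congr e1, ← tsum_subtype]
    have : ∑' x : S, (1 : Γ → ℝ≥0∞) x = ∑' x : S, (1 : ℝ≥0∞) := rfl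
    rw [this, ENNReal.tsum_set_one]
    norm_cast
    rcases S.eq_empty_or_nonempty with h0 | ⟨g₀, hg₀⟩
    · rw [h0]; simp
    · refine Set.encard_le_encard_of_injOn (f := fun g : Γ => (g : SL2R)⁻¹ * g₀) ?_ ?_
      · intro g hg
        refine ⟨Γ.mul_mem (Γ.inv_mem g.2) g₀.2, (g₀ : SL2R)⁻¹ • w, hg₀, ?_⟩
        have hg' : (g : SL2R)⁻¹ • w ∈ B := hg
        simpa [mul_smul] using hg'
      · intro g _ h _ hgh
        simpa using hgh
  have : (⊤ : ℝ≥0∞) ≤ (Φ.encard : ℝ≥0∞) * volume F := by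
    calc (⊤ : ℝ≥0∞) = volume B := hvol.symm
      _ ≤ ∑' g : Γ, volume (((fun z => (g : SL2R) • z) ⁻¹' F) ∩ B) :=
        (measure_mono hcov).trans (measure_iUnion_le _)
      _ = ∑' g : Γ, ∫⁻ w in F, ((fun z => (g : SL2R)⁻¹ • z) ⁻¹' B).indicator 1 w := tsum_congr hvolg
      _ = ∫⁻ w in F, ∑' g : Γ, ((fun z => (g : SL2R)⁻¹ • z) ⁻¹' B).indicator 1 w := by
        rw [lintegral_tsum]
        intro g
        exact (measurable_one.indicator (meas_smul _ hB)).aemeasurable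
      _ ≤ ∫⁻ w in F, (Φ.encard : ℝ≥0∞) := lintegral_mono fun w => hpt w
      _ = _ := by rw [setLIntegral_const]
  refine absurd this (not_le.2 (ENNReal.mul_lt_top ?_ hv))
  have := hfin.encard_lt_top
  rw [← hfin.cast_ncard_eq]
  simp

lemma moeb_mul_id (g : SL2R) (hc : entryC g ≠ 0) (z : ℂ) (hz : (entryC g : ℂ) * z + entryD g ≠ 0) :
    (moeb g z - (pt g : ℝ)) * (z - (pt g⁻¹ : ℝ)) = ((-1 / entryC g ^ 2 : ℝ) : ℂ) := by
  have hc' : (entryC g : ℂ) ≠ 0 := by exact_mod_cast hc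
  have det : (entryA g : ℂ) * entryD g - entryB g * entryC g = 1 := by exact_mod_cast e_det g
  rw [moeb, pt, pt, eA_inv, eC_inv]
  push_cast
  have h1 : ((entryA g : ℂ) * z + entryB g) / (entryC g * z + entryD g) - entryA g / entryC g =
      -1 / ((entryC g * z + entryD g) * entryC g) := by
    rw [div_sub_div _ _ hz hc']
    congr 1
    linear_combination -det
  have h2 : z - (entryD g : ℂ) / (-entryC g) = (entryC g * z + entryD g) / entryC g := by
    field_simp
    ring
  rw [h1, h2, div_mul_div_comm, div_eq_div_iff (mul_ne_zero (mul_ne_zero hz hc') hc') (pow_ne_zero 2 hc')]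
  ring

lemma denom_ne (g : SL2R) (z : UpperHalfPlane) : (entryC g : ℂ) * z + entryD g ≠ 0 := by
  intro h
  have him := congrArg Complex.im h
  have hre := congrArg Complex.re h
  simp at him hre
  have det := e_det g
  rcases him with h0 | h0
  · rw [h0] at hre det; simp at hre; rw [hre] at det; simp at det
  · exact z.im_pos.ne' h0

lemma density {Γ : Subgroup SL2R} {μ κ : ℝ} (H : CG Γ μ κ) (hF : FinCover Γ) (ξ r : ℝ) (hr : 0 < r) :
    ∃ g ∈ Γ, entryC g ≠ 0 ∧ |pt g - ξ| < r := by
  by_contra hno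
  push Not at hno
  obtain ⟨ρ, hρ, rfl⟩ : ∃ ρ, 0 < ρ ∧ r = 2 * ρ := ⟨r / 2, by positivity, by ring⟩
  have hκ := H.kap
  have hBm : MeasurableSet {z : UpperHalfPlane | ‖(z : ℂ) - ξ‖ < ρ} := by
    apply measurableSet_lt _ measurable_const
    exact ((UpperHalfPlane.measurable_coe).sub_const _).norm
  refine cover_contra Γ H.bf hF {z : UpperHalfPlane | ‖(z : ℂ) - ξ‖ < ρ} hBm (ball_vol ξ ρ hρ) ?_
  set E := 1 / (κ ^ 2 * ρ) + ρ with hE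
  set A0 := (E + |ξ|) / ρ with hA0
  have hE0 : 0 < E := by positivity
  have hA00 : 0 ≤ A0 := by positivity
  set N := 1 / ρ + A0 + (A0 ^ 2 + 1) / κ + 1 + 2 * ρ with hN
  have p1 : 0 < 1 / ρ := by positivity
  have p2 : 0 < (A0 ^ 2 + 1) / κ := by positivity
  refine (H.bf N).subset ?_
  rintro g ⟨hg, z, hz, hgz⟩
  refine ⟨hg, ?_⟩
  simp only [Set.mem_ofPred_eq] at hz hgz
  rw [coe_smul_eq] at hgz
  have det := e_det g
  by_cases hc : entryC g = 0
  · have ha := H.f2 g hg hc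
    rw [hc, mul_zero, sub_zero] at det
    have had : entryD g = entryA g := by
      have : entryA g ^ 2 = 1 := by rw [← sq_abs, ha]; norm_num
      have : entryA g * (entryD g - entryA g) = 0 := by linear_combination det - this
      rcases mul_eq_zero.1 this with h | h
      · rw [h] at ha; simp at ha
      · linarith
    have hd : |entryD g| = 1 := by rw [had, ha]
    have e : moeb g z = z + (entryA g * entryB g : ℝ) := by
      rw [moeb, hc]
      have hdc : (entryD g : ℂ) ≠ 0 := by
        intro h; have : entryD g = 0 := by exact_mod_cast h
        rw [this] at hd; simp at hd
      have det' : (entryA g : ℂ) * entryD g = 1 := by exact_mod_cast det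
      push_cast
      rw [zero_mul, zero_add, div_eq_iff hdc]
      have hadc : (entryD g : ℂ) = entryA g := by exact_mod_cast had
      rw [hadc] at det' ⊢
      linear_combination (-entryB g : ℂ) * det'
    have hb : |entryB g| ≤ 2 * ρ := by
      have h1 : ‖((entryA g * entryB g : ℝ) : ℂ)‖ ≤ 2 * ρ := by
        have : ((entryA g * entryB g : ℝ) : ℂ) = (moeb g z - ξ) - (z - ξ) := by rw [e]; ring
        rw [this]
        calc _ ≤ ‖moeb g z - ξ‖ + ‖(z : ℂ) - ξ‖ := norm_sub_le _ _
          _ ≤ _ := by linarith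
      rwa [Complex.norm_real, Real.norm_eq_abs, abs_mul, ha, one_mul] at h1
    rw [ha, hc, hd, abs_zero]
    refine ⟨?_, ?_, ?_, ?_⟩ <;> linarith
  · have hκc := H.f1 g hg hc
    have hcpos : 0 < |entryC g| := abs_pos.2 hc
    have id := congrArg norm (moeb_mul_id g hc z (denom_ne g z))
    rw [norm_mul, Complex.norm_real, Real.norm_eq_abs, abs_div, abs_neg, abs_one, abs_pow] at id
    have h1 := hno g hg hc
    have h2 := hno g⁻¹ (Γ.inv_mem hg) (by rw [eC_inv]; exact neg_ne_zero.2 hc)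
    have l1 : ‖((pt g : ℝ) : ℂ) - ξ‖ = |pt g - ξ| := by
      rw [← Complex.ofReal_sub, Complex.norm_real, Real.norm_eq_abs]
    have l2 : ‖((pt g⁻¹ : ℝ) : ℂ) - ξ‖ = |pt g⁻¹ - ξ| := by
      rw [← Complex.ofReal_sub, Complex.norm_real, Real.norm_eq_abs]
    set X := ‖moeb g z - (pt g : ℝ)‖ with hX
    set Y := ‖(z : ℂ) - (pt g⁻¹ : ℝ)‖ with hY
    have t1 : |pt g - ξ| ≤ ‖moeb g z - ξ‖ + X := by
      rw [← l1]
      calc _ = ‖(moeb g z - ξ) - (moeb g z - (pt g : ℝ))‖ := by congr 1; ring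
        _ ≤ _ := norm_sub_le _ _
    have t2 : |pt g⁻¹ - ξ| ≤ ‖(z : ℂ) - ξ‖ + Y := by
      rw [← l2]
      calc _ = ‖((z : ℂ) - ξ) - ((z : ℂ) - (pt g⁻¹ : ℝ))‖ := by congr 1; ring
        _ ≤ _ := norm_sub_le _ _
    have hXρ : ρ ≤ X := by linarith
    have hYρ : ρ ≤ Y := by linarith
    have hc2 : |entryC g| ^ 2 * (X * Y) = 1 := by rw [id]; field_simp
    have hcle : |entryC g| ≤ 1 / ρ := by
      rw [le_div_iff₀ hρ]
      have : (|entryC g| * ρ) ^ 2 ≤ 1 ^ 2 := by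
        rw [one_pow, ← hc2, mul_pow]
        gcongr
        nlinarith
      exact le_of_sq_le_sq this (by norm_num)
    have hκ2 : κ ^ 2 ≤ |entryC g| ^ 2 := by gcongr
    have hXle : X ≤ 1 / (κ ^ 2 * ρ) := by
      rw [le_div_iff₀ (by positivity), ← hc2]
      calc X * (κ ^ 2 * ρ) ≤ X * (|entryC g| ^ 2 * Y) := by gcongr
        _ = _ := by ring
    have hYle : Y ≤ 1 / (κ ^ 2 * ρ) := by
      rw [le_div_iff₀ (by positivity), ← hc2]
      calc Y * (κ ^ 2 * ρ) ≤ Y * (|entryC g| ^ 2 * X) := by gcongr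
        _ = _ := by ring
    have q1 : |pt g| ≤ E + |ξ| := by
      have := abs_sub_abs_le_abs_sub (pt g) ξ; rw [hE]; linarith
    have q2 : |pt g⁻¹| ≤ E + |ξ| := by
      have := abs_sub_abs_le_abs_sub (pt g⁻¹) ξ; rw [hE]; linarith
    have bA : |entryA g| ≤ A0 := by
      have : entryA g = entryC g * pt g := by rw [pt]; field_simp
      rw [this, abs_mul, hA0]
      calc _ ≤ 1 / ρ * (E + |ξ|) := by gcongr
        _ = _ := by ring
    have bD : |entryD g| ≤ A0 := by
      have : entryD g = -(entryC g * pt g⁻¹) := by rw [pt, eA_inv, eC_inv]; field_simp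
      rw [this, abs_neg, abs_mul, hA0]
      calc _ ≤ 1 / ρ * (E + |ξ|) := by gcongr
        _ = _ := by ring
    have bB : |entryB g| ≤ (A0 ^ 2 + 1) / κ := by
      rw [le_div_iff₀ hκ]
      calc |entryB g| * κ ≤ |entryB g| * |entryC g| := by gcongr
        _ = |entryA g * entryD g - 1| := by rw [← abs_mul]; congr 1; linear_combination -det
        _ ≤ |entryA g * entryD g| + |1| := abs_sub _ _
        _ ≤ A0 * A0 + 1 := by rw [abs_mul, abs_one]; gcongr
        _ = _ := by ring
    refine ⟨?_, ?_, ?_, ?_⟩ <;> linarith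

lemma exc_pt (P : Set ℝ) (ℓ a : ℝ) (hℓ : 0 < ℓ)
    (hP : ∀ p ∈ P, ∀ q ∈ P, p ≠ q → 2 * ℓ < |p - q|) :
    ∃ p : ℝ, ∀ q ∈ P, q ≠ p → ∀ z, a ≤ z → z ≤ a + ℓ → ℓ / 20 ≤ |z - q| := by
  by_cases h : ∃ p ∈ P, ∃ z, a ≤ z ∧ z ≤ a + ℓ ∧ |z - p| < ℓ / 20
  · obtain ⟨p, hp, z, h1, h2, h3⟩ := h
    refine ⟨p, fun q hq hne w w1 w2 => ?_⟩
    have := hP q hq p hp hne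
    by_contra hlt
    push Not at hlt
    rw [abs_lt] at h3 hlt
    rw [lt_abs] at this
    rcases this with h | h <;> linarith
  · refine ⟨0, fun q hq _ z h1 h2 => ?_⟩
    by_contra hlt
    push Not at hlt
    exact h ⟨q, hq, z, h1, h2, hlt⟩

lemma choose_sub (ℓ a p q : ℝ) (hℓ : 0 < ℓ) :
    ∃ a', a ≤ a' ∧ a' + ℓ / 6 ≤ a + ℓ ∧ ∀ z, a' ≤ z → z ≤ a' + ℓ / 6 →
      ℓ / 20 ≤ |z - p| ∧ ℓ / 20 ≤ |z - q| := by
  have key : ∀ p : ℝ, (∃ i : Fin 3, ∀ j : Fin 3, j ≠ i → ∀ z, a + j * (ℓ / 3) ≤ z →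
      z ≤ a + j * (ℓ / 3) + ℓ / 6 → ℓ / 20 ≤ |z - p|) := by
    intro p
    rcases lt_or_ge p (a + ℓ / 4) with h | h
    · refine ⟨0, fun j hj z h1 h2 => ?_⟩
      rw [le_abs]
      fin_cases j <;> simp at hj h1 h2 ⊢ <;> left <;> linarith
    rcases lt_or_ge p (a + 7 * ℓ / 12) with h' | h'
    · refine ⟨1, fun j hj z h1 h2 => ?_⟩
      rw [le_abs]
      fin_cases j <;> simp at hj h1 h2 ⊢
      · right; linarith
      · left; linarith
    · refine ⟨2, fun j hj z h1 h2 => ?_⟩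
      rw [le_abs]
      fin_cases j <;> simp at hj h1 h2 ⊢ <;> right <;> linarith
  obtain ⟨i, hi⟩ := key p
  obtain ⟨k, hk⟩ := key q
  have : ∃ j : Fin 3, j ≠ i ∧ j ≠ k := by clear hi hk; revert i k; decide
  obtain ⟨j, hji, hjk⟩ := this
  have hj0 : (0 : ℝ) ≤ (j : ℕ) := by positivity
  have hj2 : ((j : ℕ) : ℝ) ≤ 2 := by
    have : (j : ℕ) ≤ 2 := by omega
    exact_mod_cast this
  refine ⟨a + j * (ℓ / 3), by nlinarith, by nlinarith, fun z h1 h2 => ⟨hi j hji z h1 h2, hk j hjk z h1 h2⟩⟩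

lemma bad_pair {Γ : Subgroup SL2R} {μ κ : ℝ} (H : CG Γ μ κ) (t : ℝ) :
    ∃ x : ℝ, ∀ g ∈ Γ, entryC g ≠ 0 →
      κ / 240 / entryC g ^ 2 ≤ |x - pt g| ∧ κ / 240 / entryC g ^ 2 ≤ |x + t - pt g| := by
  have hκ := H.kap
  set ℓ : ℕ → ℝ := fun n => κ / 12 / (κ ^ 2 * 6 ^ n) with hℓ
  have ℓpos : ∀ n, 0 < ℓ n := fun n => by simp only [hℓ]; positivity
  have ℓs : ∀ n, ℓ (n + 1) = ℓ n / 6 := fun n => by simp only [hℓ]; field_simp; ring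
  let S : ℕ → Set SL2R := fun n => {g | g ∈ Γ ∧ entryC g ≠ 0 ∧ entryC g ^ 2 < κ ^ 2 * 6 ^ (n + 1)}
  have step : ∀ n a, ∃ a', a ≤ a' ∧ a' + ℓ (n + 1) ≤ a + ℓ n ∧ ∀ z, a' ≤ z → z ≤ a' + ℓ (n + 1) →
      ∀ g ∈ S n, ℓ n / 20 ≤ |z - pt g| ∧ ℓ n / 20 ≤ |z + t - pt g| := by
    intro n a
    have sep : ∀ g ∈ S n, ∀ h ∈ S n, pt g ≠ pt h → 2 * ℓ n < |pt g - pt h| := by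
      rintro g ⟨hg, cg, lg⟩ h ⟨hh, ch, lh⟩ hne
      have h1 := H.sep hg hh cg ch hne
      have h2 : |entryC g| * |entryC h| < κ ^ 2 * 6 ^ (n + 1) := by
        rw [← sq_abs] at lg lh
        nlinarith [sq_nonneg (|entryC g| - |entryC h|)]
      have h3 : κ < κ ^ 2 * 6 ^ (n + 1) * |pt g - pt h| :=
        lt_of_le_of_lt h1 (mul_lt_mul_of_pos_right h2 (abs_pos.2 (sub_ne_zero.2 hne)))
      have e : 2 * ℓ n = κ / (κ ^ 2 * 6 ^ (n + 1)) := by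
        simp only [hℓ]; field_simp; ring
      rw [e, div_lt_iff₀ (by positivity)]
      linarith
    obtain ⟨p, hp⟩ := exc_pt (pt '' S n) (ℓ n) a (ℓpos n) (by
      rintro _ ⟨g, hg, rfl⟩ _ ⟨h, hh, rfl⟩ hne; exact sep g hg h hh hne)
    obtain ⟨q, hq⟩ := exc_pt ((fun g => pt g - t) '' S n) (ℓ n) a (ℓpos n) (by
      rintro _ ⟨g, hg, rfl⟩ _ ⟨h, hh, rfl⟩ hne
      have := sep g hg h hh (by intro h; apply hne; simp [h])
      simpa using this)
    obtain ⟨a', h1, h2, h3⟩ := choose_sub (ℓ n) a p q (ℓpos n)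
    refine ⟨a', h1, by rw [ℓs]; exact h2, fun z hz1 hz2 g hg => ?_⟩
    rw [ℓs] at hz2
    obtain ⟨h4, h5⟩ := h3 z hz1 hz2
    constructor
    · by_cases hh : pt g = p
      · rw [hh]; exact h4
      · exact hp _ ⟨g, hg, rfl⟩ hh z (by linarith) (by linarith)
    · have e : z + t - pt g = z - (pt g - t) := by ring
      rw [e]
      by_cases hh : pt g - t = q
      · rw [hh]; exact h5
      · exact hq _ ⟨g, hg, rfl⟩ hh z (by linarith) (by linarith)
  choose f hf1 hf2 hf3 using step
  let x : ℕ → ℝ := fun n => Nat.rec 0 (fun n a => f n a) n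
  have xs : ∀ n, x (n + 1) = f n (x n) := fun n => rfl
  have xm : Monotone x := monotone_nat_of_le_succ (fun n => by rw [xs]; exact hf1 _ _)
  have xa : Antitone (fun n => x n + ℓ n) := antitone_nat_of_succ_le (fun n => by rw [xs]; exact hf2 _ _)
  have xle : ∀ m n, x m ≤ x n + ℓ n := by
    intro m n
    rcases le_total m n with h | h
    · have := xm h; have := ℓpos n; linarith
    · have := xa h; have := ℓpos m; simp only at *; linarith
  have bdd : BddAbove (Set.range x) := ⟨x 0 + ℓ 0, by rintro _ ⟨m, rfl⟩; exact xle m 0⟩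
  refine ⟨⨆ n, x n, fun g hg hc => ?_⟩
  have c1 : κ ^ 2 ≤ entryC g ^ 2 := by rw [← sq_abs (entryC g)]; exact pow_le_pow_left₀ hκ.le (H.f1 g hg hc) 2
  obtain ⟨n, hn1, hn2⟩ := exists_nat_pow_near (x := entryC g ^ 2 / κ ^ 2) (y := (6 : ℝ))
    (by rw [le_div_iff₀ (by positivity)]; linarith) (by norm_num)
  rw [le_div_iff₀ (by positivity)] at hn1
  rw [div_lt_iff₀ (by positivity)] at hn2
  have := hf3 n (x n) (⨆ n, x n) (by rw [← xs]; exact le_ciSup bdd (n + 1))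
    (by rw [← xs]; exact ciSup_le (fun m => xle m (n + 1))) g ⟨hg, hc, by linarith⟩
  have le : κ / 240 / entryC g ^ 2 ≤ ℓ n / 20 := by
    have : ℓ n / 20 = κ / 240 / (κ ^ 2 * 6 ^ n) := by simp only [hℓ]; field_simp; norm_num
    rw [this]
    apply div_le_div_of_nonneg_left (by positivity) (by positivity) (by linarith)
  exact ⟨le.trans this.1, le.trans this.2⟩

def Good (Γ : Subgroup SL2R) (δ : ℝ) (g : SL2R) : Prop :=
  g ∈ Γ ∧ entryC g ≠ 0 ∧ ∀ h ∈ Γ, entryC h ≠ 0 → pt h ≠ pt g → δ / entryC h ^ 2 ≤ |pt g - pt h|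

lemma exists_good {Γ : Subgroup SL2R} {μ κ : ℝ} (H : CG Γ μ κ) (hF : FinCover Γ) (y δ η : ℝ)
    (hδ : 0 < δ) (h4 : 4 * δ ≤ η) (h2 : 2 * δ ≤ κ)
    (hy : ∀ g ∈ Γ, entryC g ≠ 0 → η / entryC g ^ 2 ≤ |y - pt g|) (ε : ℝ) (hε : 0 < ε) :
    ∃ u, Good Γ δ u ∧ |y - pt u| < ε := by
  obtain ⟨u1, hu1, cu1, hd⟩ := density H hF y (ε / 2) (by positivity)
  have hκ := H.kap
  let S : Set SL2R := {g | g ∈ Γ ∧ entryC g ≠ 0 ∧ |pt g - pt u1| ≤ 2 * δ / entryC g ^ 2}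
  let M : Set ℝ := (fun g => |entryC g|) '' S
  have hM : M.Nonempty := ⟨_, u1, ⟨hu1, cu1, by simp; positivity⟩, rfl⟩
  have hb : ∀ m ∈ M, κ ≤ m := by rintro _ ⟨g, hg, rfl⟩; exact H.f1 g hg.1 hg.2.1
  have hbd : BddBelow M := ⟨κ, hb⟩
  have hm : κ ≤ sInf M := le_csInf hM hb
  obtain ⟨_, ⟨u, ⟨hu, cu, du⟩, rfl⟩, hlt⟩ := exists_lt_of_csInf_lt hM (show sInf M < 2 * sInf M by linarith)
  have cu0 : 0 < |entryC u| := abs_pos.2 cu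
  refine ⟨u, ⟨hu, cu, ?_⟩, ?_⟩
  · intro h hh ch hne
    by_contra hv
    push Not at hv
    have ch0 : 0 < |entryC h| := abs_pos.2 ch
    have hs := H.sep hu hh cu ch (Ne.symm hne)
    rw [lt_div_iff₀ (by positivity), ← sq_abs] at hv
    have h1 : κ * |entryC h| ≤ δ * |entryC u| := by
      have : κ * |entryC h| ≤ |entryC u| * |entryC h| * |pt u - pt h| * |entryC h| :=
        mul_le_mul_of_nonneg_right hs ch0.le
      nlinarith
    have h3 : 2 * |entryC h| ≤ |entryC u| := by
      by_contra hc
      push Not at hc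
      nlinarith
    have h5 : |pt h - pt u1| ≤ 2 * δ / entryC h ^ 2 := by
      have e1 : 2 * δ / entryC u ^ 2 ≤ 2 * δ / (4 * entryC h ^ 2) := by
        apply div_le_div_of_nonneg_left (by positivity) (by positivity)
        rw [← sq_abs (entryC h), ← sq_abs (entryC u)]; nlinarith
      have e2 : |pt u - pt h| ≤ δ / entryC h ^ 2 := by
        rw [le_div_iff₀ (by positivity), ← sq_abs (entryC h)]; exact hv.le
      have e3 : |pt h - pt u1| ≤ |pt u - pt h| + |pt u - pt u1| := by
        rw [abs_sub_comm (pt u) (pt h)]; exact abs_sub_le _ _ _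
      have e4 : 2 * δ / (4 * entryC h ^ 2) = (δ / entryC h ^ 2) / 2 := by field_simp; norm_num
      have e5 : 2 * δ / entryC h ^ 2 = 2 * (δ / entryC h ^ 2) := by ring
      have e6 : 0 < δ / entryC h ^ 2 := by positivity
      linarith
    have := csInf_le hbd ⟨h, ⟨hh, ch, h5⟩, rfl⟩
    simp only at this hlt
    linarith
  · have e1 := hy u hu cu
    have e2 : |y - pt u| ≤ |pt u1 - y| + |pt u - pt u1| := by
      have := abs_sub_le y (pt u1) (pt u)
      rw [abs_sub_comm y (pt u1), abs_sub_comm (pt u1) (pt u)] at this; exact this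
    have e3 : 2 * (2 * δ / entryC u ^ 2) ≤ η / entryC u ^ 2 := by
      rw [← mul_div_assoc]
      apply div_le_div_of_nonneg_right _ (by positivity); linarith
    linarith

lemma good_pair {Γ : Subgroup SL2R} {μ κ : ℝ} (H : CG Γ μ κ) (hF : FinCover Γ) (t N ε : ℝ)
    (ht : 0 ≤ t) (hε : 0 < ε) :
    ∃ h k, Good Γ (κ / 960) h ∧ Good Γ (κ / 960) k ∧ N ≤ |entryC h| ∧ N ≤ |entryC k| ∧
      |(|pt h - pt k| - t)| ≤ ε := by
  have hκ := H.kap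
  obtain ⟨x, hx⟩ := bad_pair H t
  set ε' := min (ε / 2) (κ / 240 / (N ^ 2 + 1)) with he
  have he0 : 0 < ε' := by apply lt_min <;> positivity
  have big : ∀ c z : ℝ, c ≠ 0 → κ / 240 / c ^ 2 ≤ z → z < ε' → N ≤ |c| := by
    intro c z hc h1 h2
    have h3 : κ / 240 / c ^ 2 < κ / 240 / (N ^ 2 + 1) := by
      have := min_le_right (ε / 2) (κ / 240 / (N ^ 2 + 1)); linarith
    rw [div_lt_div_iff_of_pos_left (by positivity) (by positivity) (by positivity)] at h3
    by_contra hlt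
    push Not at hlt
    rw [← sq_abs c] at h3
    have := abs_nonneg c
    nlinarith
  obtain ⟨h, gh, dh⟩ := exists_good H hF x (κ / 960) (κ / 240) (by positivity) (by linarith) (by linarith)
    (fun g hg hc => (hx g hg hc).1) ε' he0
  obtain ⟨k, gk, dk⟩ := exists_good H hF (x + t) (κ / 960) (κ / 240) (by positivity) (by linarith) (by linarith)
    (fun g hg hc => (hx g hg hc).2) ε' he0
  refine ⟨h, k, gh, gk, big _ _ gh.2.1 (hx h gh.1 gh.2.1).1 dh, big _ _ gk.2.1 (hx k gk.1 gk.2.1).2 dk, ?_⟩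
  have hle : ε' ≤ ε / 2 := min_le_left _ _
  have e1 : |(|pt h - pt k| - |t|)| ≤ |(pt h - pt k) - (-t)| := by
    have := abs_abs_sub_abs_le_abs_sub (pt h - pt k) (-t)
    rwa [abs_neg] at this
  rw [abs_of_nonneg ht] at e1
  refine e1.trans ?_
  rw [abs_lt] at dh dk
  rw [abs_le]
  constructor <;> linarith

lemma eC_mul_pt (g h : SL2R) (hg : entryC g ≠ 0) (hh : entryC h ≠ 0) :
    entryC (g * h) = entryC g * entryC h * (pt h - pt g⁻¹) := by
  rw [eC_mul, pt, pt, eA_inv, eC_inv]; field_simp; ring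

lemma Good.inv {Γ : Subgroup SL2R} {δ : ℝ} {g : SL2R} (hg : Good Γ δ g) : Good Γ δ g⁻¹ := by
  obtain ⟨hm, hc, H⟩ := hg
  refine ⟨Γ.inv_mem hm, by rw [eC_inv]; simpa using hc, fun h hh ch hne => ?_⟩
  have c1 := eC_mul_pt g h hc ch
  have c2 : entryC (g * h) ≠ 0 := by
    rw [c1]; exact mul_ne_zero (mul_ne_zero hc ch) (sub_ne_zero.2 hne)
  have c3 := pt_sub g (g * h) hc c2
  rw [inv_mul_cancel_left] at c3
  have c4 := H (g * h) (Γ.mul_mem hm hh) c2 (by intro h; rw [h] at c3; simp at c3; exact ch c3)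
  have p1 : 0 < |entryC g| := abs_pos.2 hc
  have p2 : 0 < |entryC h| := abs_pos.2 ch
  have p3 : 0 < |entryC (g * h)| := abs_pos.2 c2
  rw [div_le_iff₀ (by positivity), ← sq_abs] at c4
  rw [div_le_iff₀ (by positivity), ← sq_abs, abs_sub_comm]
  have c5 : |entryC h| = |entryC g| * |entryC (g * h)| * |pt g - pt (g * h)| := by
    rw [← abs_mul, ← abs_mul, ← c3]
  have c6 : |entryC (g * h)| = |entryC g| * |entryC h| * |pt h - pt g⁻¹| := by
    rw [← abs_mul, ← abs_mul, ← c1]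
  have : δ * |entryC g| ≤ (|pt h - pt g⁻¹| * |entryC h| ^ 2) * |entryC g| := by
    calc δ * |entryC g| ≤ |pt g - pt (g * h)| * |entryC (g * h)| ^ 2 * |entryC g| :=
          mul_le_mul_of_nonneg_right c4 p1.le
      _ = (|entryC g| * |entryC (g * h)| * |pt g - pt (g * h)|) * |entryC (g * h)| := by ring
      _ = |entryC h| * (|entryC g| * |entryC h| * |pt h - pt g⁻¹|) := by rw [← c5, ← c6]
      _ = _ := by ring
  exact le_of_mul_le_mul_right this p1

lemma tr_left (t g : SL2R) (b : ℝ) (tA : entryA t = 1) (tB : entryB t = b) (tC : entryC t = 0)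
    (tD : entryD t = 1) : entryC (t * g) = entryC g ∧ (entryC g ≠ 0 → pt (t * g) = pt g + b) := by
  have : entryC (t * g) = entryC g := by rw [eC_mul, tC, tD]; ring
  refine ⟨this, fun h => ?_⟩
  rw [pt, this, eA_mul, tA, tB, pt]; field_simp

lemma Good.tr {Γ : Subgroup SL2R} {δ : ℝ} {g t : SL2R} (hg : Good Γ δ g) (ht : t ∈ Γ) (b : ℝ)
    (tA : entryA t = 1) (tB : entryB t = b) (tC : entryC t = 0)
    (tD : entryD t = 1) : Good Γ δ (t * g) := by
  obtain ⟨hm, hc, H⟩ := hg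
  obtain ⟨l1, l2⟩ := tr_left t g b tA tB tC tD
  refine ⟨Γ.mul_mem ht hm, by rw [l1]; exact hc, fun h hh ch hne => ?_⟩
  obtain ⟨m1, m2⟩ := tr_left t⁻¹ h (-b) (by rw [eA_inv, tD]) (by rw [eB_inv, tB]) (by rw [eC_inv, tC]; simp)
    (by rw [eD_inv, tA])
  rw [l2 hc] at hne ⊢
  have := H (t⁻¹ * h) (Γ.mul_mem (Γ.inv_mem ht) hh) (by rw [m1]; exact ch)
    (by rw [m2 ch]; intro h; apply hne; linarith)
  rw [m1, m2 ch] at this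
  convert this using 2
  ring

lemma inv_limit (D : ℕ → Set ℝ) (hD : ∀ n, IsCompact (D n)) (hne : ∀ n, (D n).Nonempty)
    (R : ℕ → ℝ → ℝ → Prop) (hR : ∀ n, IsClosed {p : ℝ × ℝ | R n p.1 p.2})
    (hs : ∀ n, ∀ z ∈ D (n + 1), ∃ w ∈ D n, R n w z) :
    ∃ x : ℕ → ℝ, ∀ n, x n ∈ D n ∧ R n (x n) (x (n + 1)) := by
  have key : ∀ N m : ℕ, ∃ x : ℕ → ℝ, (∀ n, x n ∈ D (m + n)) ∧
      ∀ n < N, R (m + n) (x n) (x (n + 1)) := by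
    intro N
    induction N with
    | zero =>
      intro m
      choose y hy using hne
      exact ⟨fun n => y (m + n), fun n => hy _, fun n hn => absurd hn (by omega)⟩
    | succ N ih =>
      intro m
      obtain ⟨x, hx1, hx2⟩ := ih (m + 1)
      obtain ⟨w, hw1, hw2⟩ := hs m (x 0) (hx1 0)
      refine ⟨fun n => Nat.casesOn n w x, ?_, ?_⟩
      · rintro (_ | n)
        · exact hw1
        · have := hx1 n
          rwa [show m + 1 + n = m + (n + 1) by omega] at this
      · rintro (_ | n) hn
        · exact hw2
        · have := hx2 n (by omega)
          rwa [show m + 1 + n = m + (n + 1) by omega] at this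
  let P : Set (ℕ → ℝ) := Set.univ.pi D
  have hP : IsCompact P := isCompact_univ_pi hD
  let S : ℕ → Set (ℕ → ℝ) := fun N => P ∩ ⋂ n ∈ Set.Iio N, {x | R n (x n) (x (n + 1))}
  have hcl : ∀ n, IsClosed {x : ℕ → ℝ | R n (x n) (x (n + 1))} := by
    intro n
    exact (hR n).preimage (f := fun x : ℕ → ℝ => (x n, x (n + 1))) (by fun_prop)
  have hScl : ∀ N, IsClosed (S N) := fun N =>
    hP.isClosed.inter (isClosed_biInter fun n _ => hcl n)
  obtain ⟨x, hx⟩ := IsCompact.nonempty_iInter_of_sequence_nonempty_isCompact_isClosed S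
    (by
      intro N x hx
      refine ⟨hx.1, ?_⟩
      have h2 := hx.2
      simp only [Set.mem_iInter] at h2 ⊢
      intro n hn
      exact h2 n (by simp at hn ⊢; omega))
    (by
      intro N
      obtain ⟨x, h1, h2⟩ := key N 0
      refine ⟨x, ?_, ?_⟩
      · intro n _; simpa using h1 n
      · simp only [Set.mem_iInter]
        intro n hn
        have := h2 n hn
        simpa using this)
    (hP.of_isClosed_subset (hScl 0) Set.inter_subset_left) hScl
  rw [Set.mem_iInter] at hx
  refine ⟨x, fun n => ⟨(hx 0).1 n trivial, ?_⟩⟩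
  have := (hx (n + 1)).2
  simp only [Set.mem_iInter] at this
  exact this n (by simp)

/-- wedge product -/
def wd (p q : ℝ × ℝ) : ℝ := p.1 * q.2 - p.2 * q.1

def act (g : SL2R) (p : ℝ × ℝ) : ℝ × ℝ :=
  (entryA g * p.1 + entryB g * p.2, entryC g * p.1 + entryD g * p.2)

def col (g : SL2R) : ℝ × ℝ := (entryA g, entryC g)

lemma act_col (g h : SL2R) : act g (col h) = col (g * h) := by
  simp [act, col, eA_mul, eC_mul]

lemma wd_act (g : SL2R) (p q : ℝ × ℝ) : wd (act g p) (act g q) = wd p q := by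
  have := e_det g
  simp only [wd, act]
  linear_combination (p.1 * q.2 - p.2 * q.1) * this

/-- inverse distance -/
def dd (v p q : ℝ × ℝ) : ℝ := |wd p q| / (|wd p v| * |wd q v|)

lemma dd_act (g : SL2R) (v p q : ℝ × ℝ) : dd (act g v) (act g p) (act g q) = dd v p q := by
  simp only [dd, wd_act]

lemma dd_smul (v p q : ℝ × ℝ) (s : ℝ) (hs : s ≠ 0) : dd v p (s * q.1, s * q.2) = dd v p q := by
  have e1 : wd p (s * q.1, s * q.2) = s * wd p q := by simp [wd]; ring
  have e2 : wd (s * q.1, s * q.2) v = s * wd q v := by simp [wd]; ring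
  rw [dd, e1, e2, abs_mul, abs_mul, dd, show |wd p v| * (|s| * |wd q v|) = |s| * (|wd p v| * |wd q v|) by ring,
    mul_div_mul_left _ _ (abs_pos.2 hs).ne']

lemma dd_nonneg (v p q : ℝ × ℝ) : 0 ≤ dd v p q := by unfold dd; positivity

lemma dd_tri (v p s q : ℝ × ℝ) (hs : wd s v ≠ 0) : dd v p q ≤ dd v p s + dd v s q := by
  by_cases hp : wd p v = 0
  · have : dd v p q = 0 := by simp [dd, hp]
    rw [this]; exact add_nonneg (dd_nonneg _ _ _) (dd_nonneg _ _ _)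
  by_cases hq : wd q v = 0
  · have : dd v p q = 0 := by simp [dd, hq]
    rw [this]; exact add_nonneg (dd_nonneg _ _ _) (dd_nonneg _ _ _)
  have ps : 0 < |wd s v| := abs_pos.2 hs
  have pp : 0 < |wd p v| := abs_pos.2 hp
  have pq : 0 < |wd q v| := abs_pos.2 hq
  have id : wd p q * wd s v = wd p s * wd q v + wd s q * wd p v := by simp only [wd]; ring
  have le : |wd p q| * |wd s v| ≤ |wd p s| * |wd q v| + |wd s q| * |wd p v| := by
    rw [← abs_mul, ← abs_mul, ← abs_mul, id]; exact abs_add_le _ _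
  simp only [dd]
  rw [div_add_div _ _ (by positivity) (by positivity), div_le_div_iff₀ (by positivity) (by positivity)]
  have : 0 ≤ |wd p v| * |wd q v| * |wd s v| := by positivity
  nlinarith [mul_le_mul_of_nonneg_left le this]

/-- `1/(c² |α - g∞|)` -/
def Dv (α : ℝ) (g : SL2R) : ℝ := 1 / (entryC g ^ 2 * |α - pt g|)

lemma Dv_eq (α : ℝ) (g : SL2R) (hg : entryC g ≠ 0) : Dv α g = dd (col g) (1, 0) (α, 1) := by
  have e1 : wd (1, 0) (α, 1) = 1 := by simp [wd]
  have e2 : wd (1, 0) (col g) = entryC g := by simp [wd, col]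
  have e3 : wd (α, 1) (col g) = entryC g * (α - pt g) := by simp [wd, col, pt]; field_simp
  rw [Dv, dd, e1, e2, e3, abs_one, abs_mul, ← sq_abs]
  congr 1; ring

lemma Dv_le (α : ℝ) (g : SL2R) (κ s : ℝ) (hκ : 0 < κ) (hs : 0 < s) (h1 : κ ≤ |entryC g|)
    (h2 : s ≤ |α - pt g|) : Dv α g ≤ 1 / (κ ^ 2 * s) := by
  unfold Dv
  rw [← sq_abs]
  gcongr

def Aw (B : ℕ → SL2R) : ℕ → SL2R
  | 0 => 1
  | n + 1 => Aw B n * B n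

structure Glue (Γ : Subgroup SL2R) (δ r : ℝ) (B : ℕ → SL2R) : Prop where
  good : ∀ n, Good Γ δ (B n)
  del : 0 < δ
  r0 : 0 < r
  big : ∀ n, 2 ≤ r ^ 2 * entryC (B n) ^ 2
  turn : ∀ n, 4 * r ≤ |pt (B n)⁻¹ - pt (B (n + 1))|

lemma pt_mul_sub (g h : SL2R) (hc : entryC g ≠ 0) (ch : entryC h ≠ 0) (c2 : entryC (g * h) ≠ 0) :
    entryC g ^ 2 * (pt h - pt g⁻¹) * (pt g - pt (g * h)) = 1 := by
  have c1 := eC_mul_pt g h hc ch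
  have c3 := pt_sub g (g * h) hc c2
  rw [inv_mul_cancel_left, c1] at c3
  have : entryC h * (entryC g ^ 2 * (pt h - pt g⁻¹) * (pt g - pt (g * h))) = entryC h * 1 := by
    rw [mul_one]; nth_rewrite 2 [c3]; ring
  exact mul_left_cancel₀ ch this

lemma Aw_mem {Γ : Subgroup SL2R} {δ r : ℝ} {B : ℕ → SL2R} (G : Glue Γ δ r B) (n : ℕ) : Aw B n ∈ Γ := by
  induction n with
  | zero => exact Γ.one_mem
  | succ n ih => exact Γ.mul_mem ih (G.good n).1

lemma small_of (c y z r : ℝ) (hc : c ≠ 0) (hr : 0 < r) (h : |c ^ 2 * y * z| = 1) (hy : r ≤ |y|) :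
    |z| ≤ 1 / (c ^ 2 * r) := by
  rw [le_div_iff₀ (by positivity)]
  rw [abs_mul, abs_mul, abs_of_nonneg (sq_nonneg c)] at h
  have : 0 < c ^ 2 := by positivity
  have h1 := abs_nonneg z
  have : c ^ 2 * |z| * r ≤ c ^ 2 * |z| * |y| := by gcongr
  nlinarith

lemma Glue.small {Γ : Subgroup SL2R} {δ r : ℝ} {B : ℕ → SL2R} (G : Glue Γ δ r B) (n : ℕ) :
    1 / (entryC (B n) ^ 2 * r) ≤ r / 2 := by
  have h := G.big n
  have hc := (G.good n).2.1
  have hr := G.r0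
  rw [div_le_div_iff₀ (by positivity) (by norm_num)]
  nlinarith

lemma Glue.three {Γ : Subgroup SL2R} {δ r : ℝ} {B : ℕ → SL2R} (G : Glue Γ δ r B) (n : ℕ) :
    2 ≤ |entryC (B n)| * (3 * r) := by
  have h := G.big n
  have hr := G.r0
  rw [← sq_abs (entryC (B n))] at h
  have := abs_nonneg (entryC (B n))
  by_contra hlt
  push Not at hlt
  have h0 : 0 ≤ r * |entryC (B n)| := by positivity
  nlinarith

lemma far_of {a b c r : ℝ} (h1 : 4 * r ≤ |a - b|) (h2 : |c - a| ≤ r / 2) (hr : 0 < r) :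
    3 * r ≤ |c - b| := by
  rw [le_abs] at *
  rw [abs_le] at h2
  rcases h1 with h | h
  · left; linarith
  · right; linarith

lemma Glue.past {Γ : Subgroup SL2R} {δ r : ℝ} {B : ℕ → SL2R} (G : Glue Γ δ r B) (n : ℕ) :
    entryC (Aw B (n + 1)) ≠ 0 ∧
    |pt (Aw B (n + 1))⁻¹ - pt (B n)⁻¹| ≤ 1 / (entryC (B n) ^ 2 * r) := by
  have hr := G.r0
  induction n with
  | zero =>
    simp only [Aw, one_mul, sub_self, abs_zero]
    exact ⟨(G.good 0).2.1, by positivity⟩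
  | succ n ih =>
    obtain ⟨i1, i2⟩ := ih
    have hb := (G.good (n + 1)).2.1
    have f := far_of (G.turn n) (i2.trans (G.small n)) hr
    have hne : pt (B (n + 1)) - pt (Aw B (n + 1))⁻¹ ≠ 0 := by
      intro h0; rw [abs_sub_comm, h0, abs_zero] at f; linarith
    have c : entryC (Aw B (n + 1 + 1)) ≠ 0 := by
      rw [Aw, eC_mul_pt _ _ i1 hb]
      exact mul_ne_zero (mul_ne_zero i1 hb) hne
    refine ⟨c, ?_⟩
    have e : (Aw B (n + 1 + 1))⁻¹ = (B (n + 1))⁻¹ * (Aw B (n + 1))⁻¹ := by rw [Aw, mul_inv_rev]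
    have h := pt_mul_sub (B (n + 1))⁻¹ (Aw B (n + 1))⁻¹ (by rw [eC_inv]; simpa using hb)
      (by rw [eC_inv]; simpa using i1) (by rw [← e, eC_inv]; simpa using c)
    rw [← e, inv_inv, eC_inv, neg_sq] at h
    rw [abs_sub_comm]
    exact small_of _ _ _ r hb hr (by rw [h, abs_one]) (by linarith)

lemma Glue.grow {Γ : Subgroup SL2R} {δ r : ℝ} {B : ℕ → SL2R} (G : Glue Γ δ r B) (n : ℕ) :
    2 * |entryC (Aw B (n + 1))| ≤ |entryC (Aw B (n + 2))| := by
  have hr := G.r0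
  obtain ⟨i1, i2⟩ := G.past n
  have hb := (G.good (n + 1)).2.1
  have f := far_of (G.turn n) (i2.trans (G.small n)) hr
  have t := G.three (n + 1)
  rw [show Aw B (n + 2) = Aw B (n + 1) * B (n + 1) from rfl, eC_mul_pt _ _ i1 hb, abs_mul, abs_mul,
    abs_sub_comm (pt (B (n + 1)))]
  have : |entryC (B (n + 1))| * (3 * r) ≤ |entryC (B (n + 1))| * |pt (Aw B (n + 1))⁻¹ - pt (B (n + 1))| := by
    gcongr
  have h2 := mul_le_mul_of_nonneg_left (t.trans this) (abs_nonneg (entryC (Aw B (n + 1))))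
  linarith

lemma Glue.inj {Γ : Subgroup SL2R} {μ κ : ℝ} (H : CG Γ μ κ) {δ r : ℝ} {B : ℕ → SL2R}
    (G : Glue Γ δ r B) : Function.Injective (fun n => pt (Aw B (n + 1))) := by
  have sm : StrictMono (fun n => |entryC (Aw B (n + 1))|) := strictMono_nat_of_lt_succ (fun n => by
    have := G.grow n
    have h0 := abs_pos.2 (G.past n).1
    rw [show n + 1 + 1 = n + 2 by omega]; linarith)
  intro m n h
  simp only at h
  apply sm.injective
  simp only
  apply H.same (Aw_mem G _) (Aw_mem G _)
  rw [pt_sub _ _ (G.past m).1 (G.past n).1, h]; simp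

lemma Glue.exists_x {Γ : Subgroup SL2R} {δ r : ℝ} {B : ℕ → SL2R} (G : Glue Γ δ r B) :
    ∃ x : ℕ → ℝ, ∀ n, |x n - pt (B n)| ≤ 1 / (entryC (B n) ^ 2 * r) ∧
      entryC (B n) ^ 2 * (x (n + 1) - pt (B n)⁻¹) * (x n - pt (B n)) = -1 := by
  have hr := G.r0
  have far : ∀ n z, |z - pt (B (n + 1))| ≤ r / 2 → 3 * r ≤ |z - pt (B n)⁻¹| := fun n z hz =>
    far_of (by rw [abs_sub_comm]; exact G.turn n) hz hr
  obtain ⟨x, hx⟩ := inv_limit (fun n => Metric.closedBall (pt (B n)) (r / 2))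
    (fun n => isCompact_closedBall _ _) (fun n => ⟨pt (B n), by simp; positivity⟩)
    (fun n w z => entryC (B n) ^ 2 * (z - pt (B n)⁻¹) * (w - pt (B n)) = -1)
    (fun n => isClosed_eq (by fun_prop) (by fun_prop))
    (by
      intro n z hz
      rw [Metric.mem_closedBall, Real.dist_eq] at hz
      have f := far n z hz
      have hc := (G.good n).2.1
      have hy : z - pt (B n)⁻¹ ≠ 0 := by
        intro h0; rw [h0, abs_zero] at f; linarith
      have rel : entryC (B n) ^ 2 * (z - pt (B n)⁻¹) *
          (pt (B n) - 1 / (entryC (B n) ^ 2 * (z - pt (B n)⁻¹)) - pt (B n)) = -1 := by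
        field_simp; ring
      refine ⟨_, ?_, rel⟩
      rw [Metric.mem_closedBall, Real.dist_eq]
      refine le_trans (small_of _ _ _ r hc hr (by rw [rel]; simp) (by linarith)) (G.small n))
  refine ⟨x, fun n => ⟨?_, (hx n).2⟩⟩
  have h1 := (hx (n + 1)).1
  rw [Metric.mem_closedBall, Real.dist_eq] at h1
  have f := far n _ h1
  exact small_of _ _ _ r (G.good n).2.1 hr (by rw [(hx n).2]; simp) (by linarith)

lemma wd_col (g h : SL2R) : wd (col g) (col h) = entryC (g⁻¹ * h) := by
  simp [wd, col, eC_mul, eC_inv, eD_inv]; ring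

def XRel (B : ℕ → SL2R) (r : ℝ) (x : ℕ → ℝ) : Prop :=
  ∀ n, |x n - pt (B n)| ≤ 1 / (entryC (B n) ^ 2 * r) ∧
      entryC (B n) ^ 2 * (x (n + 1) - pt (B n)⁻¹) * (x n - pt (B n)) = -1

lemma act_X (g : SL2R) (hc : entryC g ≠ 0) (y z : ℝ) (h : entryC g ^ 2 * (z - pt g⁻¹) * (y - pt g) = -1) :
    entryC g * z + entryD g ≠ 0 ∧
    act g (z, 1) = ((entryC g * z + entryD g) * y, (entryC g * z + entryD g) * 1) := by
  have e : entryC g * z + entryD g = entryC g * (z - pt g⁻¹) := by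
    rw [pt, eA_inv, eC_inv]; field_simp; ring
  have hne : z - pt g⁻¹ ≠ 0 := by intro h0; rw [h0] at h; simp at h
  have det := e_det g
  refine ⟨by rw [e]; exact mul_ne_zero hc hne, ?_⟩
  simp only [act, mul_one]
  refine Prod.ext ?_ rfl
  simp only
  have h2 : (entryC g * z + entryD g) * (entryC g * y - entryA g) = -1 := by
    rw [← h, e, pt, pt, eA_inv, eC_inv]; field_simp
  apply mul_left_cancel₀ hc
  linear_combination -h2 - det

lemma Glue.inv_dd {Γ : Subgroup SL2R} {δ r : ℝ} {B : ℕ → SL2R} (G : Glue Γ δ r B) (x : ℕ → ℝ)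
    (hx : XRel B r x) (g : SL2R) (hg : entryC g ≠ 0) (n : ℕ) :
    dd (col ((Aw B n)⁻¹ * g)) (col (Aw B n)⁻¹) (x n, 1) = Dv (x 0) g := by
  induction n with
  | zero => rw [Dv_eq _ _ hg]; simp [Aw, col, eA_one, eC_one]
  | succ n ih =>
    rw [← ih, ← dd_act (B n), act_col, act_col]
    obtain ⟨h1, h2⟩ := act_X (B n) (G.good n).2.1 (x n) (x (n + 1)) (hx n).2
    rw [h2]
    have e1 : B n * ((Aw B (n + 1))⁻¹ * g) = (Aw B n)⁻¹ * g := by rw [Aw]; group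
    have e2 : B n * (Aw B (n + 1))⁻¹ = (Aw B n)⁻¹ := by rw [Aw]; group
    rw [e1, e2]
    exact dd_smul _ _ (x n, 1) _ h1

lemma Glue.special {Γ : Subgroup SL2R} {μ κ : ℝ} (H : CG Γ μ κ) {δ r : ℝ} {B : ℕ → SL2R}
    (G : Glue Γ δ r B) (x : ℕ → ℝ)
    (hx : XRel B r x) (g : SL2R) (hm : g ∈ Γ) (hg : entryC g ≠ 0) (n : ℕ)
    (h : entryC ((Aw B (n + 1))⁻¹ * g) = 0) :
    abs (Dv (x 0) g - |pt (B n)⁻¹ - pt (B (n + 1))|) ≤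
      1 / (entryC (B n) ^ 2 * r) + 1 / (entryC (B (n + 1)) ^ 2 * r) := by
  have e := G.inv_dd x hx g hg (n + 1)
  have a1 := H.f2 _ (Γ.mul_mem (Γ.inv_mem (Aw_mem G (n + 1))) hm) h
  obtain ⟨i1, i2⟩ := G.past n
  have hc : entryC (Aw B (n + 1))⁻¹ ≠ 0 := by rw [eC_inv]; simpa using i1
  have e2 : Dv (x 0) g = |pt (Aw B (n + 1))⁻¹ - x (n + 1)| := by
    rw [← e, dd]
    have w1 : |wd (col (Aw B (n + 1))⁻¹) (x (n + 1), 1)| =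
        |entryC (Aw B (n + 1))⁻¹| * |pt (Aw B (n + 1))⁻¹ - x (n + 1)| := by
      rw [← abs_mul]; congr 1; simp only [wd, col, pt]; field_simp
    have w2 : |wd (col (Aw B (n + 1))⁻¹) (col ((Aw B (n + 1))⁻¹ * g))| = |entryC (Aw B (n + 1))⁻¹| := by
      simp only [wd, col, h]; rw [mul_zero, zero_sub, abs_neg, abs_mul, a1, mul_one]
    have w3 : |wd (x (n + 1), 1) (col ((Aw B (n + 1))⁻¹ * g))| = 1 := by
      simp only [wd, col, h]; rw [mul_zero, zero_sub, abs_neg, one_mul, a1]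
    rw [w1, w2, w3, mul_one, mul_div_cancel_left₀ _ (abs_pos.2 hc).ne']
  rw [e2]
  have h3 := (hx (n + 1)).1
  calc _ ≤ |(pt (Aw B (n + 1))⁻¹ - x (n + 1)) - (pt (B n)⁻¹ - pt (B (n + 1)))| :=
        abs_abs_sub_abs_le_abs_sub _ _
    _ = |(pt (Aw B (n + 1))⁻¹ - pt (B n)⁻¹) - (x (n + 1) - pt (B (n + 1)))| := by congr 1; ring
    _ ≤ |pt (Aw B (n + 1))⁻¹ - pt (B n)⁻¹| + |x (n + 1) - pt (B (n + 1))| := abs_sub _ _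
    _ ≤ _ := by gcongr

lemma Glue.generic {Γ : Subgroup SL2R} {μ κ : ℝ} (H : CG Γ μ κ) {δ r : ℝ} {B : ℕ → SL2R}
    (G : Glue Γ δ r B) (x : ℕ → ℝ)
    (hx : XRel B r x) (g : SL2R) (hm : g ∈ Γ) (hg : entryC g ≠ 0) :
    Dv (x 0) g ≤ 1 / (κ ^ 2 * r) + 1 / δ + 1 / (κ ^ 2 * (r / 2)) ∨
      ∃ n, entryC ((Aw B (n + 1))⁻¹ * g) = 0 := by
  by_contra hcon
  push Not at hcon
  obtain ⟨hK, hns⟩ := hcon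
  have hr := G.r0
  have hκ := H.kap
  have hδ := G.del
  have q1 : 0 < 1 / (κ ^ 2 * r) := by positivity
  have q2 : 0 < 1 / δ := by positivity
  have q3 : 0 < 1 / (κ ^ 2 * (r / 2)) := by positivity
  have xb : ∀ n, |x n - pt (B n)| ≤ r / 2 := fun n => (hx n).1.trans (G.small n)
  set gn : ℕ → SL2R := fun n => (Aw B n)⁻¹ * g with hgn
  have gmem : ∀ n, gn n ∈ Γ := fun n => Γ.mul_mem (Γ.inv_mem (Aw_mem G n)) hm
  have gs : ∀ n, gn (n + 1) = (B n)⁻¹ * gn n := fun n => by simp only [hgn, Aw]; group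
  have gs' : ∀ n, gn n = B n * gn (n + 1) := fun n => by rw [gs]; group
  have gc : ∀ n, entryC (gn n) ≠ 0 := by
    rintro (_ | n)
    · simpa [hgn, Aw] using hg
    · exact hns n
  have away : ∀ n, r ≤ |pt (gn n) - pt (B n)| → Dv (x n) (gn n) ≤ 1 / (κ ^ 2 * (r / 2)) := by
    intro n hn
    apply Dv_le _ _ κ (r / 2) hκ (by positivity) (H.f1 _ (gmem n) (gc n))
    have := abs_le.1 (xb n)
    rw [le_abs] at hn ⊢
    rcases hn with h | h
    · right; linarith
    · left; linarith
  have near : ∀ n, |pt (gn n) - pt (B n)| < r := by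
    intro n
    induction n with
    | zero =>
      by_contra hf
      push Not at hf
      have := away 0 hf
      have e : gn 0 = g := by simp [hgn, Aw]
      rw [e] at this
      linarith
    | succ n ih =>
      by_contra hf
      push Not at hf
      have third := away (n + 1) hf
      have e := G.inv_dd x hx g hg n
      have s1 : wd (col 1) (col (gn n)) ≠ 0 := by rw [wd_col]; simpa using gc n
      have s2 : wd (col (B n)) (col (gn n)) ≠ 0 := by rw [wd_col, ← gs]; exact gc (n + 1)
      have t1 := dd_tri (col (gn n)) (col (Aw B n)⁻¹) (col 1) (x n, 1) s1
      have t2 := dd_tri (col (gn n)) (col 1) (col (B n)) (x n, 1) s2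
      have d3 : dd (col (gn n)) (col (B n)) (x n, 1) = Dv (x (n + 1)) (gn (n + 1)) := by
        rw [Dv_eq _ _ (gc (n + 1)), ← dd_act (B n) _ (1, 0), act_col, ← gs']
        obtain ⟨h1, h2⟩ := act_X (B n) (G.good n).2.1 (x n) (x (n + 1)) (hx n).2
        rw [h2]
        have e3 : act (B n) (1, 0) = col (B n) := by simp [act, col]
        rw [e3]
        exact (dd_smul _ _ (x n, 1) _ h1).symm
      have d2 : dd (col (gn n)) (col 1) (col (B n)) ≤ 1 / δ := by
        have hb := (G.good n).2.1
        have ps := pt_sub (B n) (gn n) hb (gc n)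
        rw [← gs] at ps
        have hne : pt (gn n) ≠ pt (B n) := by
          intro h0; rw [h0] at ps; simp at ps; exact gc (n + 1) ps
        have gd := (G.good n).2.2 (gn n) (gmem n) (gc n) hne
        rw [dd, wd_col, wd_col, wd_col, ← gs, ps, inv_one, one_mul, one_mul, abs_mul, abs_mul]
        have c1 := abs_pos.2 hb
        have c2 := abs_pos.2 (gc n)
        have c3 := abs_pos.2 (sub_ne_zero.2 hne.symm)
        have gcn := gc n
        rw [div_le_iff₀ (by positivity), ← sq_abs] at gd
        rw [div_le_div_iff₀ (by positivity) hδ]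
        nlinarith
      have d1 : dd (col (gn n)) (col (Aw B n)⁻¹) (col 1) ≤ 1 / (κ ^ 2 * r) := by
        rcases n with _ | m
        · have : dd (col (gn 0)) (col (Aw B 0)⁻¹) (col 1) = 0 := by simp [dd, wd, Aw]; left; ring
          rw [this]; exact q1.le
        · obtain ⟨i1, i2⟩ := G.past m
          have hc : entryC (Aw B (m + 1))⁻¹ ≠ 0 := by rw [eC_inv]; simpa using i1
          have f := far_of (G.turn m) (i2.trans (G.small m)) hr
          have f2 : r ≤ |pt (Aw B (m + 1))⁻¹ - pt (gn (m + 1))| := by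
            rw [abs_lt] at ih
            rw [le_abs] at f ⊢
            rcases f with h | h
            · left; linarith
            · right; linarith
          have := Dv_le (pt (Aw B (m + 1))⁻¹) (gn (m + 1)) κ r hκ hr (H.f1 _ (gmem _) (gc _)) f2
          refine le_trans (le_of_eq ?_) this
          have ps := pt_sub (Aw B (m + 1))⁻¹ (gn (m + 1)) hc (gc _)
          rw [dd, wd_col, wd_col, wd_col, ps, inv_one, one_mul, mul_one, inv_inv, abs_mul, abs_mul, Dv, ← sq_abs (entryC (gn (m + 1)))]
          have c1 := abs_pos.2 i1
          have c2 := abs_pos.2 (gc (m + 1))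
          have c3 : 0 < |pt (Aw B (m + 1))⁻¹ - pt (gn (m + 1))| := by linarith
          rw [eC_inv, abs_neg]
          field_simp
      have e' : dd (col (gn n)) (col (Aw B n)⁻¹) (x n, 1) = Dv (x 0) g := e
      linarith
  have dec : ∀ n, 2 * |entryC (gn (n + 1))| ≤ |entryC (gn n)| := by
    intro n
    have hb := (G.good n).2.1
    have h1 := eC_mul_pt (B n) (gn (n + 1)) hb (gc _)
    rw [← gs'] at h1
    have h3 : 3 * r ≤ |pt (gn (n + 1)) - pt (B n)⁻¹| := by
      have h4 := G.turn n
      have h5 := abs_lt.1 (near (n + 1))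
      rw [le_abs] at h4 ⊢
      rcases h4 with h | h
      · right; linarith
      · left; linarith
    rw [h1, abs_mul, abs_mul]
    have t := G.three n
    have : |entryC (B n)| * (3 * r) ≤ |entryC (B n)| * |pt (gn (n + 1)) - pt (B n)⁻¹| := by gcongr
    have h2 := mul_le_mul_of_nonneg_left (t.trans this) (abs_nonneg (entryC (gn (n + 1))))
    linarith
  have all : ∀ n, 2 ^ n * |entryC (gn n)| ≤ |entryC (gn 0)| := by
    intro n
    induction n with
    | zero => simp
    | succ n ih =>
      have := dec n
      have p : (0 : ℝ) < 2 ^ n := by positivity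
      rw [pow_succ]
      nlinarith
  obtain ⟨n, hn⟩ := pow_unbounded_of_one_lt (|entryC (gn 0)| / κ) (one_lt_two)
  rw [div_lt_iff₀ hκ] at hn
  have h1 := all n
  have h2 := H.f1 _ (gmem n) (gc n)
  have : (2 : ℝ) ^ n * κ ≤ 2 ^ n * |entryC (gn n)| := by gcongr
  linarith

lemma lt_iff_Dv (α k : ℝ) (g : SL2R) (hg : entryC g ≠ 0) (hk : 0 < k) (hne : α ≠ pt g) :
    |α - pt g| < 1 / (k * entryC g ^ 2) ↔ k < Dv α g := by
  have : 0 < |α - pt g| := abs_pos.2 (sub_ne_zero.2 hne)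
  rw [Dv, lt_div_iff₀ (by positivity), lt_div_iff₀ (by positivity)]
  constructor <;> intro h <;> linarith

lemma Glue.value {Γ : Subgroup SL2R} {μ κ : ℝ} (H : CG Γ μ κ) {δ r : ℝ} {B : ℕ → SL2R}
    (G : Glue Γ δ r B) (x : ℕ → ℝ) (hx : XRel B r x) (L : ℝ≥0∞)
    (hK : ∀ k : ℝ, L < ENNReal.ofReal k → 1 / (κ ^ 2 * r) + 1 / δ + 1 / (κ ^ 2 * (r / 2)) < k)
    (hup : ∀ k : ℝ, L < ENNReal.ofReal k → ∀ᶠ n in Filter.atTop,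
      |pt (B n)⁻¹ - pt (B (n + 1))| +
      (1 / (entryC (B n) ^ 2 * r) + 1 / (entryC (B (n + 1)) ^ 2 * r)) < k)
    (hlo : ∀ k : ℝ, 0 < k → ENNReal.ofReal k < L → ∃ᶠ n in Filter.atTop,
      k < |pt (B n)⁻¹ - pt (B (n + 1))| -
      (1 / (entryC (B n) ^ 2 * r) + 1 / (entryC (B (n + 1)) ^ 2 * r))) :
    LagrangeValue Γ (x 0) = L := by
  apply le_antisymm
  · apply sSup_le
    rintro _ ⟨k, ⟨hk, hinf⟩, rfl⟩
    by_contra hlt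
    push Not at hlt
    have h1 := hK k hlt
    obtain ⟨N, hN⟩ := Filter.eventually_atTop.1 (hup k hlt)
    apply hinf
    apply Set.Finite.subset (((Set.finite_Iio N).image (fun n => pt (Aw B (n + 1)))).insert (x 0))
    rintro v ⟨g, hg, hc, hv, hlt2⟩
    change v = pt g at hv
    by_cases hne : x 0 = pt g
    · left; rw [hv, hne]
    · right
      rw [hv, lt_iff_Dv _ _ _ hc hk hne] at hlt2
      rcases G.generic H x hx g hg hc with h | ⟨n, hn⟩
      · linarith
      · have hs := (abs_le.1 (G.special H x hx g hg hc n hn)).2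
        refine ⟨n, ?_, ?_⟩
        · by_contra hnN
          simp only [Set.mem_Iio, not_lt] at hnN
          have := hN n hnN
          linarith
        · have ps := pt_sub (Aw B (n + 1)) g (G.past n).1 hc
          rw [hn] at ps
          rcases mul_eq_zero.1 ps.symm with h | h
          · exact absurd h (mul_ne_zero (G.past n).1 hc)
          · simp only; rw [hv]; linarith
  · apply le_of_forall_lt
    intro c hc
    obtain ⟨d, hcd, hdL⟩ := exists_between hc
    have hd : ENNReal.ofReal d.toReal = d := ENNReal.ofReal_toReal (hdL.trans_le le_top).ne
    have hd0 : 0 < d.toReal := by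
      rw [← ENNReal.ofReal_pos, hd]; exact lt_of_le_of_lt (zero_le) hcd
    refine hcd.trans_le ?_
    rw [← hd]
    apply le_sSup
    refine ⟨d.toReal, ⟨hd0, ?_⟩, rfl⟩
    have fr := hlo d.toReal hd0 (by rw [hd]; exact hdL)
    rw [Nat.frequently_atTop_iff_infinite] at fr
    refine (fr.image (G.inj H).injOn).mono ?_
    rintro _ ⟨n, hn, rfl⟩
    have c1 := (G.past n).1
    have hs := (abs_le.1 (G.special H x hx (Aw B (n + 1)) (Aw_mem G _) c1 n (by simp [eC_one]))).1
    simp only [Set.mem_ofPred_eq] at hn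
    have hD : d.toReal < Dv (x 0) (Aw B (n + 1)) := by linarith
    have hne : x 0 ≠ pt (Aw B (n + 1)) := by
      intro h0; rw [Dv, h0] at hD; simp at hD; linarith
    exact ⟨Aw B (n + 1), Aw_mem G _, c1, rfl, (lt_iff_Dv _ _ _ c1 hd0 hne).2 hD⟩

lemma exists_turn {Γ : Subgroup SL2R} {μ κ : ℝ} (H : CG Γ μ κ) {δ : ℝ} (h k : SL2R)
    (hk : Good Γ δ k) :
    ∃ b, Good Γ δ b ∧ |entryC b| = |entryC k| ∧ pt b⁻¹ = pt k ∧
      μ ≤ |pt h⁻¹ - pt b| ∧ |pt h⁻¹ - pt b| ≤ 2 * μ := by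
  have hμ := H.mu
  have gi := hk.inv
  set j : ℤ := ⌊(pt h⁻¹ - pt k⁻¹) / μ⌋ - 1 with hj
  obtain ⟨t, ht, tA, tB, tC, tD⟩ := H.tr j
  obtain ⟨l1, l2⟩ := tr_left t k⁻¹ (j * μ) tA tB tC tD
  refine ⟨t * k⁻¹, gi.tr ht _ tA tB tC tD, by rw [l1, eC_inv, abs_neg], ?_, ?_⟩
  · rw [mul_inv_rev, inv_inv, pt, pt, eA_mul, eC_mul, eA_inv, eC_inv, tD, tC]; simp
  · rw [l2 gi.2.1]
    have f1 := Int.floor_le ((pt h⁻¹ - pt k⁻¹) / μ)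
    have f2 := Int.lt_floor_add_one ((pt h⁻¹ - pt k⁻¹) / μ)
    rw [le_div_iff₀ hμ] at f1
    rw [div_lt_iff₀ hμ] at f2
    have hjr : (j : ℝ) = (⌊(pt h⁻¹ - pt k⁻¹) / μ⌋ : ℝ) - 1 := by rw [hj]; push_cast; ring
    rw [hjr]
    rw [abs_of_nonneg (by nlinarith)]
    constructor <;> nlinarith

lemma spectrum_mem {Γ : Subgroup SL2R} {μ κ : ℝ} (H : CG Γ μ κ) (hF : FinCover Γ) (L : ℝ≥0∞)
    (t : ℕ → ℝ) (ht : ∀ n, μ + 1 ≤ t n)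
    (hK : ∀ k : ℝ, L < ENNReal.ofReal k →
      1 / (κ ^ 2 * (μ / 4)) + 1 / (κ / 960) + 1 / (κ ^ 2 * (μ / 4 / 2)) < k ∧ 2 * μ + 1 < k)
    (hup : ∀ k : ℝ, L < ENNReal.ofReal k → ∃ s > 0, ∀ n, t n + s < k)
    (hlo : ∀ k : ℝ, 0 < k → ENNReal.ofReal k < L → ∃ s > 0, ∀ᶠ n in Filter.atTop, k + s < t n) :
    L ∈ LagrangeSpectrum Γ := by
  have hμ := H.mu
  have hκ := H.kap
  set r := μ / 4 with hr
  have hr0 : 0 < r := by positivity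
  have hp := fun m : ℕ => good_pair H hF (t m) (2 / r + m / r + 1 + m) (1 / (m + 1)) (by have := ht m; linarith) (by positivity)
  choose k h gk gh nk nh hd using hp
  choose b gb cb pb tb1 tb2 using fun m => exists_turn H (h (m - 1)) (k m) (gk m)
  let B : ℕ → SL2R := fun n => if Even n then b (n / 2) else h (n / 2)
  have Be : ∀ m, B (2 * m) = b m := fun m => by simp [B]
  have Bo : ∀ m, B (2 * m + 1) = h m := fun m => by
    have : (2 * m + 1) / 2 = m := by omega
    simp [B, this]
  have Bs : ∀ m, B (2 * m + 1 + 1) = b (m + 1) := fun m => by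
    rw [← Be]; congr 1
  -- size
  have size : ∀ n, 2 / r + ((n / 2 : ℕ) : ℝ) / r + 1 + ((n / 2 : ℕ) : ℝ) ≤ |entryC (B n)| := by
    intro n
    simp only [B]
    split_ifs
    · rw [cb]; exact nk _
    · exact nh _
  have Te : ∀ m, |pt (B (2 * m))⁻¹ - pt (B (2 * m + 1))| = |pt (k m) - pt (h m)| := fun m => by
    rw [Be, Bo, pb]
  have To : ∀ m, |pt (B (2 * m + 1))⁻¹ - pt (B (2 * m + 1 + 1))| = |pt (h m)⁻¹ - pt (b (m + 1))| := fun m => by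
    rw [Bs, Bo]
  have G : Glue Γ (κ / 960) r B := by
    refine ⟨?_, by positivity, hr0, ?_, ?_⟩
    · intro n
      simp only [B]
      split_ifs
      · exact gb _
      · exact gh _
    · intro n
      have h1 := size n
      have h2 : 2 ≤ r * |entryC (B n)| := by
        have : 2 / r ≤ |entryC (B n)| := by
          have : 0 ≤ ((n / 2 : ℕ) : ℝ) / r + 1 + ((n / 2 : ℕ) : ℝ) := by positivity
          linarith
        rw [div_le_iff₀ hr0] at this; linarith
      rw [← sq_abs (entryC (B n))]
      nlinarith
    · intro n
      rcases Nat.even_or_odd' n with ⟨m, rfl | rfl⟩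
      · rw [Te]
        have h1 := (abs_le.1 (hd m)).1
        have h2 := ht m
        have h3 : 1 / ((m : ℝ) + 1) ≤ 1 := by
          rw [div_le_one (by positivity)]; linarith [(Nat.cast_nonneg m : (0 : ℝ) ≤ m)]
        rw [hr]; linarith
      · rw [To]
        have := tb1 (m + 1)
        simp only [Nat.add_sub_cancel] at this
        rw [hr]; linarith
  obtain ⟨x, hx⟩ := G.exists_x
  refine ⟨x 0, G.value H x hx L (fun k hk => (hK k hk).1) ?_ ?_⟩
  all_goals
    have esm : ∀ n, 1 / (entryC (B n) ^ 2 * r) ≤ 1 / (((n / 2 : ℕ) : ℝ) + 1) := by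
      intro n
      have h1 := size n
      have h2 : ((n / 2 : ℕ) : ℝ) + 1 ≤ r * |entryC (B n)| := by
        have : (((n / 2 : ℕ) : ℝ) + 1) / r ≤ |entryC (B n)| := by
          have : (((n / 2 : ℕ) : ℝ) + 1) / r = ((n / 2 : ℕ) : ℝ) / r + 1 / r := by ring
          have h3 : 2 / r = 1 / r + 1 / r := by ring
          have : 0 < 1 / r := by positivity
          have : (0 : ℝ) ≤ ((n / 2 : ℕ) : ℝ) := by positivity
          linarith
        rw [div_le_iff₀ hr0] at this; linarith
      have h3 : 1 ≤ |entryC (B n)| := by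
        have : 0 ≤ 2 / r + ((n / 2 : ℕ) : ℝ) / r + ((n / 2 : ℕ) : ℝ) := by positivity
        linarith
      rw [← sq_abs (entryC (B n))]
      apply one_div_le_one_div_of_le (by positivity)
      nlinarith
    have lim1 : Filter.Tendsto (fun n : ℕ => 1 / (((n / 2 : ℕ) : ℝ) + 1)) Filter.atTop (nhds 0) :=
      (tendsto_one_div_add_atTop_nhds_zero_nat (𝕜 := ℝ)).comp (Nat.tendsto_div_const_atTop (by norm_num))
    have lim2 : ∀ s : ℝ, 0 < s → ∀ᶠ n : ℕ in Filter.atTop, 1 / (((n / 2 : ℕ) : ℝ) + 1) < s ∧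
        1 / ((((n + 1) / 2 : ℕ) : ℝ) + 1) < s := fun s hs =>
      (lim1.eventually_lt_const hs).and
        (((Filter.tendsto_add_atTop_iff_nat 1).2 lim1).eventually_lt_const hs)
  · intro c hc
    obtain ⟨s, hs, hst⟩ := hup c hc
    have hc2 := (hK c hc).2
    filter_upwards [lim2 (min (s / 3) (1 / 3)) (by positivity)] with n hn
    have m1 := min_le_left (s / 3) (1 / 3 : ℝ)
    have m2 := min_le_right (s / 3) (1 / 3 : ℝ)
    have e1 := esm n
    have e2 := esm (n + 1)
    rcases Nat.even_or_odd' n with ⟨m, rfl | rfl⟩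
    · rw [Te]
      have h1 := (abs_le.1 (hd m)).2
      have h2 := hst m
      have : (2 * m) / 2 = m := by omega
      have h3 := hn.1
      rw [this] at h3
      linarith
    · rw [To]
      have := tb2 (m + 1)
      simp only [Nat.add_sub_cancel] at this
      linarith
  · intro c hc hcL
    obtain ⟨s, hs, hst⟩ := hlo c hc hcL
    have tt : Filter.Tendsto (fun m : ℕ => 2 * m) Filter.atTop Filter.atTop :=
      Filter.tendsto_id.const_mul_atTop' (by norm_num)
    have ev := hst.and (tt.eventually (lim2 (s / 3) (by positivity)))
    have := ev.frequently
    refine (Filter.Tendsto.frequently (f := fun m : ℕ => 2 * m) ?_ (this.mono ?_))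
    · exact tt
    · rintro m ⟨h2, hn⟩
      have e1 := esm (2 * m)
      have e2 := esm (2 * m + 1)
      rw [Te]
      have h1 := (abs_le.1 (hd m)).1
      have : (2 * m) / 2 = m := by omega
      have h3 := hn.1
      have h4 := hn.2
      rw [this] at h3 e1
      linarith

/-- **Hall rays at other cusps.** If `G ≤ SL(2,ℝ)` is a non-uniform lattice and
`e ∈ ℝ` is a cusp of `G`, then for every `ḡ ∈ SL(2,ℝ)` with `ḡ·e = ∞` (that is,
`c(ḡ)e + d(ḡ) = 0`), the Lagrange spectrum of the conjugate group `ḡGḡ⁻¹` at `∞`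
contains a Hall ray. -/
theorem hall_ray_at_other_cusps (G : Subgroup SL2R) (hG : IsNonUniformLattice G)
    (e : ℝ) (he : IsCuspPointOf G e)
    (gbar : SL2R) (hgbar : entryC gbar * e + entryD gbar = 0) :
    ∃ L₀ : ℝ, ∀ L : ℝ≥0∞, ENNReal.ofReal L₀ ≤ L →
      L ∈ LagrangeSpectrum (Subgroup.map (MulAut.conj gbar).toMonoidHom G) := by
  have hbf := bf_conj G (bf_of_discrete G hG.1) gbar
  obtain ⟨T, hT, μ, hμ, hA, hB, hC, hD⟩ := cusp_infty G e he gbar hgbar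
  obtain ⟨κ, H⟩ := CG_of _ hbf T hT μ hμ hA hB hC hD
  have hF := finCover_conj G (finCover_of_lattice G hG) gbar
  have hκ := H.kap
  set K := 1 / (κ ^ 2 * (μ / 4)) + 1 / (κ / 960) + 1 / (κ ^ 2 * (μ / 4 / 2)) with hKd
  have hK0 : 0 < K := by positivity
  refine ⟨K + 2 * μ + 1, fun L hL => ?_⟩
  by_cases hT : L = ⊤
  · subst hT
    refine spectrum_mem H hF ⊤ (fun n => n + μ + 1) (fun n => ?_) (fun k hk => ?_) (fun k hk => ?_)
      (fun k _ _ => ?_)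
    · have : (0 : ℝ) ≤ n := by positivity
      linarith
    · exact absurd hk not_top_lt
    · exact absurd hk not_top_lt
    · refine ⟨1, one_pos, ?_⟩
      filter_upwards [Filter.eventually_ge_atTop ⌈k⌉₊] with n hn
      have : k ≤ n := (Nat.le_ceil k).trans (by exact_mod_cast hn)
      linarith
  · have hle : K + 2 * μ + 1 ≤ L.toReal := (ENNReal.ofReal_le_iff_le_toReal hT).1 hL
    have up : ∀ k : ℝ, L < ENNReal.ofReal k → L.toReal < k := fun k hk =>
      (ENNReal.lt_ofReal_iff_toReal_lt hT).1 hk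
    refine spectrum_mem H hF L (fun _ => L.toReal) (fun n => ?_) (fun k hk => ?_) (fun k hk => ?_)
      (fun k h0 hk => ?_)
    · linarith
    · have := up k hk
      constructor <;> linarith
    · have := up k hk
      exact ⟨(k - L.toReal) / 2, by linarith, fun _ => by linarith⟩
    · have : k < L.toReal := (ENNReal.ofReal_lt_iff_lt_toReal h0.le hT).1 hk
      exact ⟨(L.toReal - k) / 2, by linarith, Filter.Eventually.of_forall fun _ => by linarith⟩
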